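/- arXiv:math/0507225 — 9 statements merged into one kernel-verified Lean document; each statement's English description precedes it below -/
import Mathlib

section
/- The generating function f(z,q) = Σ_{n≥0} C_n(q) z^n of the Carlitz–Riordan q-Catalan numbers satisfies f(z,q)·E₂(−z) = E₂(−qz); equivalently f(z,q) = E₂(−qz)/E₂(−z). -/
/-! The recurrence for the Catalan numbers says `f(z) = 1 + z f(z) f(qz)`, which determines `f`
(`cat_unique`).  The coefficients of `E₂` satisfy `(1 - q^(k+1)) e_(k+1) = q^(2k) e_k`, so
`A(z) = E₂(-z)` satisfies `A(qz) = A(z) + z A(q²z)`.  Dividing by the unit `A(z)`, the quotient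
`g(z) = A(qz) / A(z)` satisfies the same equation `g(z) = 1 + z g(z) g(qz)`, hence `g = f`. -/

open PowerSeries Finset

/-- The equation `g(z) = 1 + z g(z) g(qz)` determines `g`: its coefficients obey the
Carlitz–Riordan recurrence. -/
theorem cat_unique {K : Type*} [Field K] (q : K) (Cat : ℕ → K) (hC0 : Cat 0 = 1)
    (hC : ∀ n : ℕ, 1 ≤ n →
      Cat n = ∑ k ∈ range n, q ^ k * Cat k * Cat (n - k - 1))
    (g : PowerSeries K) (hg : g = 1 + X * (rescale q g * g)) (n : ℕ) :
    coeff n g = Cat n := by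
  induction n using Nat.strong_induction_on with
  | _ n ih =>
    rw [hg]
    cases n with
    | zero => simp [hC0]
    | succ n =>
      rw [hC (n + 1) (by omega), map_add, coeff_succ_X_mul, coeff_mul,
        Finset.Nat.sum_antidiagonal_eq_sum_range_succ_mk]
      simp only [coeff_one, Nat.succ_ne_zero, if_false, zero_add, coeff_rescale]
      refine Finset.sum_congr rfl fun k hk => ?_
      rw [Finset.mem_range] at hk
      rw [ih k (by omega), ih (n - k) (by omega), show n + 1 - k - 1 = n - k by omega]

/-- The generating function of the Carlitz–Riordan q-Catalan numbers equals
`E₂(−qz)/E₂(−z)`, i.e. `f(z,q)·E₂(−z) = E₂(−qz)`. -/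
theorem stmt_1 {K : Type*} [Field K] (q : K) (hq : ∀ k : ℕ, 1 ≤ k → q ^ k ≠ 1)
    (E₂ : PowerSeries K)
    (hE : E₂ = PowerSeries.mk fun k =>
      q ^ (2 * Nat.choose k 2) / ∏ i ∈ range k, (1 - q ^ (i + 1)))
    (Cat : ℕ → K) (hC0 : Cat 0 = 1)
    (hC : ∀ n : ℕ, 1 ≤ n →
      Cat n = ∑ k ∈ range n, q ^ k * Cat k * Cat (n - k - 1)) :
    (PowerSeries.mk fun n => Cat n) * PowerSeries.rescale (-1) E₂
      = PowerSeries.rescale (-q) E₂ := by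
  have hrec : ∀ k, (1 - q ^ (k + 1)) * coeff (k + 1) E₂ = q ^ (2 * k) * coeff k E₂ := by
    intro k
    have h1 : 1 - q ^ (k + 1) ≠ 0 := sub_ne_zero.2 (hq (k + 1) (by omega)).symm
    have h2 : ∏ i ∈ range k, (1 - q ^ (i + 1)) ≠ 0 :=
      Finset.prod_ne_zero_iff.2 fun i _ => sub_ne_zero.2 (hq (i + 1) (by omega)).symm
    have h3 : 2 * (k + 1).choose 2 = 2 * k + 2 * k.choose 2 := by
      rw [Nat.choose_succ_succ' k 1, Nat.choose_one_right]; ring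
    rw [hE, coeff_mk, coeff_mk, h3, Finset.prod_range_succ, pow_add q (2 * k)]
    generalize 1 - q ^ (k + 1) = c at h1 ⊢
    field_simp
  set A := rescale (-1 : K) E₂ with hA
  have hAq : rescale (-q) E₂ = rescale q A := by
    rw [hA, rescale_rescale]; simp
  rw [hAq]
  have hfun : rescale q A = A + X * rescale q (rescale q A) := by
    ext n
    cases n with
    | zero => simp
    | succ k =>
      rw [map_add, coeff_succ_X_mul]
      simp only [hA, coeff_rescale]
      linear_combination (-1 : K) ^ k * hrec k
  have hA0 : constantCoeff A ≠ 0 := by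
    rw [← coeff_zero_eq_constantCoeff_apply, hA, coeff_rescale, hE, coeff_mk]
    simp
  have hAne : A ≠ 0 := by
    rintro h
    simp [h] at hA0
  have hgA : (rescale q A * A⁻¹) * A = rescale q A := by
    rw [mul_assoc, PowerSeries.inv_mul_cancel A hA0, mul_one]
  generalize rescale q A * A⁻¹ = g at hgA
  have hgA' : rescale q g * rescale q A = rescale q (rescale q A) := by
    rw [← map_mul, hgA]
  have hg : g = 1 + X * (rescale q g * g) := by
    apply mul_right_cancel₀ hAne
    linear_combination (1 - X * rescale q g) * hgA + hfun - X * hgA'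
  have hf : (PowerSeries.mk fun n => Cat n) = g := by
    ext n
    rw [coeff_mk, cat_unique q Cat hC0 hC g hg n]
  rw [hf, hgA]
end

section
/- For every natural number r, the formal power series G_r(z,n) satisfy G_r(z,1) = 1 + z·G_r(z,r). -/
open PowerSeries Finset

/-!
The identity is the `q`-difference equation `E(−qz) − E(−z) = z·E(−q^r z)` divided by `E(−z)`.
For the `k`-th coefficient `a k` of `E`, that equation says
`(1 − q^(k+1))·a (k+1) = q^(rk)·a k`. This holds because `choose (k+1) 2 = choose k 2 + k` and
because the denominator of `a (k+1)` has the one extra factor `1 − q^(k+1)`, which is nonzero by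
hypothesis.
-/

/-- The series `G_r(z,n) = E_r(−q^n z)·E_r(−z)⁻¹` satisfy `G_r(z,1) = 1 + z·G_r(z,r)`. -/
theorem stmt_3 {K : Type*} [Field K] (q : K) (hq : ∀ k : ℕ, 1 ≤ k → q ^ k ≠ 1)
    (r : ℕ) (E : PowerSeries K)
    (hE : E = PowerSeries.mk fun k =>
      q ^ (r * Nat.choose k 2) / ∏ i ∈ range k, (1 - q ^ (i + 1)))
    (G : ℕ → PowerSeries K)
    (hG : ∀ n : ℕ, G n = PowerSeries.rescale (-(q ^ n)) E * (PowerSeries.rescale (-1) E)⁻¹) :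
    G 1 = 1 + PowerSeries.X * G r := by
  have hrec : ∀ k : ℕ, (1 - q ^ (k + 1)) * coeff (k + 1) E = (q ^ r) ^ k * coeff k E := by
    intro k
    have h1 : 1 - q ^ (k + 1) ≠ 0 := sub_ne_zero.2 (hq (k + 1) (by omega)).symm
    have hP : ∏ i ∈ range k, (1 - q ^ (i + 1)) ≠ 0 :=
      prod_ne_zero_iff.2 fun i _ => sub_ne_zero.2 (hq (i + 1) (by omega)).symm
    have hc : (k + 1).choose 2 = k + k.choose 2 := by
      rw [Nat.choose_succ_succ' k 1, Nat.choose_one_right]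
    rw [hE, coeff_mk, coeff_mk, prod_range_succ, hc, mul_add, pow_add q (r * k), pow_mul q r k]
    generalize 1 - q ^ (k + 1) = d at h1 ⊢
    field_simp
  have hdiff : rescale (-(q ^ 1)) E = rescale (-1) E + X * rescale (-(q ^ r)) E := by
    ext n
    cases n with
    | zero => rw [map_add, coeff_zero_X_mul, coeff_rescale, coeff_rescale, pow_zero, pow_zero, add_zero]
    | succ k =>
      rw [map_add, coeff_succ_X_mul, coeff_rescale, coeff_rescale, coeff_rescale,
        neg_pow (q ^ 1), neg_pow (q ^ r), pow_one, pow_succ (-1 : K) k]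
      linear_combination (-1) ^ k * hrec k
  have hconst : constantCoeff (rescale (-1) E) ≠ 0 := by
    rw [← coeff_zero_eq_constantCoeff_apply, coeff_rescale, hE, coeff_mk]
    simp
  rw [hG, hG, hdiff, add_mul, PowerSeries.mul_inv_cancel _ hconst, mul_assoc]
end

section
/- For every n ≥ 0, the Hankel determinant of the q-Narayana polynomials satisfies det(C_{i+j}(a,b,q))_{i,j=0}^{n} = q^{n²(n+1)/2} · b^{n(n+1)/2} · ∏_{i=0}^{n−1} (a + q^i b)^{n−i}. -/
/-!
The generating function `P(a,b) = ∑ Cₙ Xⁿ` satisfies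
`P(X) = 1 + a X P(X) + b X P(X) P(qX)`, and `P(a,b)(qX) = P(qa,qb)(X)`.

*Continued fraction.* With `R = P(a,qb)` and `F = R / (1 - b X R)`, the series `1 + (a+b) X F`
satisfies the equation defining `P(a,b)`, hence equals it (`narSeries_eq`). Applying this to
`P(qa,qb)` gives `P(a,b) = 1 + (a+b) X P + (a+b) q b X² P F₁`, where
`F₁ = R₁ / (1 - q b X R₁)` and `R₁ = P(qa, q²b)`. Iterating with
`(a,b) ↦ (qa, q²b)` produces a J-fraction for `P(a,b)` with coefficients
`λ_k = q^(3k+1) b (a + q^k b)`.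

*Hankel determinant of a J-fraction.* If `F_k = 1 + β_k X F_k + λ_k X² F_k F_{k+1}`, then the
coefficients `L i k` of `X^k F₀ ⋯ F_k` satisfy the Stieltjes three-term recurrence, which makes
`∑_k λ₀ ⋯ λ_{k-1} · L i k · L j k` depend on `i + j` only. This is an `L D Lᵀ` factorization of
the Hankel matrix of `F₀` with `L` lower unitriangular (`hankel_det_jfraction`).
-/

open Finset

namespace QNarayana

open PowerSeries

variable {R : Type*} [CommRing R]

/-! ### Hankel determinants of J-fractions -/

/-- The series `X^k F₀ ⋯ F_k`, whose coefficients form the `k`-th column of the Stieltjes matrix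
of the J-fraction with tails `F`. -/
noncomputable def col (F : ℕ → R⟦X⟧) (k : ℕ) : R⟦X⟧ :=
  X ^ k * ∏ j ∈ range (k + 1), F j

lemma coeff_col_of_lt (F : ℕ → R⟦X⟧) {i k : ℕ} (h : i < k) : coeff i (col F k) = 0 := by
  rw [col, coeff_X_pow_mul', if_neg (by omega)]

lemma coeff_col_self (F : ℕ → R⟦X⟧) (hF : ∀ k, constantCoeff (F k) = 1) (k : ℕ) :
    coeff k (col F k) = 1 := by
  rw [col, coeff_X_pow_mul', if_pos le_rfl]
  simp [map_prod, hF]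

lemma constantCoeff_tail {F : ℕ → R⟦X⟧} {β l : ℕ → R}
    (hF : ∀ k, F k = 1 + C (β k) * X * F k + C (l k) * X ^ 2 * F k * F (k + 1)) (k : ℕ) :
    constantCoeff (F k) = 1 := by
  rw [hF k]; simp

lemma coeff_col_zero {F : ℕ → R⟦X⟧} {β l : ℕ → R}
    (hF : ∀ k, F k = 1 + C (β k) * X * F k + C (l k) * X ^ 2 * F k * F (k + 1)) (i : ℕ) :
    coeff (i + 1) (col F 0) = β 0 * coeff i (col F 0) + l 0 * coeff i (col F 1) := by
  have h : col F 0 = 1 + X * (C (β 0) * col F 0) + X * (C (l 0) * col F 1) := by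
    simp only [col, prod_range_succ, prod_range_zero]
    linear_combination hF 0
  conv_lhs => rw [h]
  simp [coeff_succ_X_mul, coeff_one]

lemma coeff_col_succ {F : ℕ → R⟦X⟧} {β l : ℕ → R}
    (hF : ∀ k, F k = 1 + C (β k) * X * F k + C (l k) * X ^ 2 * F k * F (k + 1)) (i k : ℕ) :
    coeff (i + 1) (col F (k + 1)) = coeff i (col F k) + β (k + 1) * coeff i (col F (k + 1))
      + l (k + 1) * coeff i (col F (k + 2)) := by
  have h : col F (k + 1) = X * (col F k + C (β (k + 1)) * col F (k + 1)
      + C (l (k + 1)) * col F (k + 2)) := by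
    simp only [col, prod_range_succ _ (k + 1), prod_range_succ _ (k + 2)]
    linear_combination X ^ (k + 1) * (∏ j ∈ range (k + 1), F j) * hF (k + 1)
  conv_lhs => rw [h]
  simp only [map_add, coeff_succ_X_mul, coeff_C_mul]

/-- The truncated pairing of rows `i` and `j` of the Stieltjes matrix, with weights
`λ₀ ⋯ λ_{k-1}`. -/
noncomputable def pairing (F : ℕ → R⟦X⟧) (l : ℕ → R) (N i j : ℕ) : R :=
  ∑ k ∈ range N, (∏ m ∈ range k, l m) * coeff i (col F k) * coeff j (col F k)

/-- One application of the three-term recurrence to the left index. The last two sums are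
exchanged under `i ↔ j`, so the right-hand side is symmetric. -/
lemma pairing_succ_left {F : ℕ → R⟦X⟧} {β l : ℕ → R}
    (hF : ∀ k, F k = 1 + C (β k) * X * F k + C (l k) * X ^ 2 * F k * F (k + 1))
    {M i : ℕ} (hi : i ≤ M) (j : ℕ) :
    pairing F l (M + 1) (i + 1) j =
      (∑ k ∈ range (M + 1),
        (∏ m ∈ range k, l m) * β k * coeff i (col F k) * coeff j (col F k))
      + (∑ k ∈ range M,
        (∏ m ∈ range (k + 1), l m) * coeff i (col F k) * coeff j (col F (k + 1)))
      + ∑ k ∈ range M,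
        (∏ m ∈ range (k + 1), l m) * coeff i (col F (k + 1)) * coeff j (col F k) := by
  have hb : coeff i (col F (M + 1)) = 0 := coeff_col_of_lt F (by omega)
  have e : ∑ k ∈ range M,
        (∏ m ∈ range (k + 1), l m) * coeff i (col F (k + 1)) * coeff j (col F k)
      = ∑ k ∈ range (M + 1),
        (∏ m ∈ range (k + 1), l m) * coeff i (col F (k + 1)) * coeff j (col F k) := by
    rw [sum_range_succ _ M, hb]; simp
  rw [e, pairing, sum_range_succ', sum_range_succ' _ M, sum_range_succ' _ M,
    coeff_col_zero hF]
  simp only [coeff_col_succ hF]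
  have e2 : ∀ k, ∏ m ∈ range (k + 1 + 1), l m = (∏ m ∈ range (k + 1), l m) * l (k + 1) :=
    fun k => prod_range_succ _ _
  simp only [e2, mul_add, add_mul, sum_add_distrib, prod_range_zero, zero_add, prod_range_one]
  have e3 : ∀ k, (∏ m ∈ range (k + 1), l m) * (β (k + 1) * coeff i (col F (k + 1)))
      = (∏ m ∈ range (k + 1), l m) * β (k + 1) * coeff i (col F (k + 1)) := fun k => by ring
  have e4 : ∀ k, (∏ m ∈ range (k + 1), l m) * (l (k + 1) * coeff i (col F (k + 2)))
      = (∏ m ∈ range (k + 1), l m) * l (k + 1) * coeff i (col F (k + 1 + 1)) :=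
    fun k => by ring
  simp only [e3, e4]
  ring

lemma pairing_comm (F : ℕ → R⟦X⟧) (l : ℕ → R) (N i j : ℕ) :
    pairing F l N i j = pairing F l N j i :=
  sum_congr rfl fun _ _ => by ring

lemma pairing_shift {F : ℕ → R⟦X⟧} {β l : ℕ → R}
    (hF : ∀ k, F k = 1 + C (β k) * X * F k + C (l k) * X ^ 2 * F k * F (k + 1))
    {M i j : ℕ} (hi : i ≤ M) (hj : j ≤ M) :
    pairing F l (M + 1) (i + 1) j = pairing F l (M + 1) i (j + 1) := by
  rw [pairing_comm F l _ i, pairing_succ_left hF hi, pairing_succ_left hF hj, add_assoc, add_assoc]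
  congr 1
  · exact sum_congr rfl fun _ _ => by ring
  · rw [add_comm]
    congr 1 <;> exact sum_congr rfl fun _ _ => by ring

lemma pairing_eq {F : ℕ → R⟦X⟧} {β l : ℕ → R}
    (hF : ∀ k, F k = 1 + C (β k) * X * F k + C (l k) * X ^ 2 * F k * F (k + 1))
    {M : ℕ} (j : ℕ) : ∀ i, i + j ≤ M → pairing F l (M + 1) i j = coeff (i + j) (F 0) := by
  induction j with
  | zero =>
    intro i _
    rw [pairing, sum_range_succ', coeff_col_self F (constantCoeff_tail hF)]
    rw [sum_eq_zero fun k _ => by rw [coeff_col_of_lt F (Nat.succ_pos k), mul_zero]]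
    simp [col]
  | succ j ih =>
    intro i h
    rw [← pairing_shift hF (by omega) (by omega), ih _ (by omega)]
    congr 2; omega

/-- The columns beyond `i` vanish in row `i`, so the pairing may be truncated there. -/
lemma pairing_trunc (F : ℕ → R⟦X⟧) (l : ℕ → R) {N N' i : ℕ} (j : ℕ) (h : i < N) (h' : N ≤ N') :
    pairing F l N' i j = pairing F l N i j := by
  symm
  refine sum_subset (range_mono h') fun k _ hk => ?_
  rw [mem_range, not_lt] at hk
  rw [coeff_col_of_lt F (by omega : i < k)]; ring

lemma hankel_det_jfraction {F : ℕ → R⟦X⟧} {β l : ℕ → R}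
    (hF : ∀ k, F k = 1 + C (β k) * X * F k + C (l k) * X ^ 2 * F k * F (k + 1)) (n : ℕ) :
    Matrix.det (Matrix.of fun i j : Fin (n + 1) => coeff (i.val + j.val) (F 0))
      = ∏ k ∈ range n, l k ^ (n - k) := by
  let L : Matrix (Fin (n + 1)) (Fin (n + 1)) R := Matrix.of fun i k => coeff i.val (col F k.val)
  let D : Fin (n + 1) → R := fun k => ∏ m ∈ range k.val, l m
  have hfac : (Matrix.of fun i j : Fin (n + 1) => coeff (i.val + j.val) (F 0))
      = L * Matrix.diagonal D * L.transpose := by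
    ext i j
    rw [Matrix.of_apply, ← pairing_eq hF (M := 2 * n) j.val i.val (by omega),
      pairing_trunc F l j.val i.isLt (by omega), pairing, Matrix.mul_apply,
      ← Fin.sum_univ_eq_sum_range
        (fun k => (∏ m ∈ range k, l m) * coeff i.val (col F k) * coeff j.val (col F k))]
    refine sum_congr rfl fun k _ => ?_
    simp only [Matrix.mul_diagonal, Matrix.transpose_apply, L, D, Matrix.of_apply]
    ring
  have hL : L.det = 1 := by
    rw [Matrix.det_of_isLowerTriangular]
    · exact prod_eq_one fun k _ => coeff_col_self F (constantCoeff_tail hF) k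
    · intro i j hij
      exact coeff_col_of_lt F hij
  rw [hfac, Matrix.det_mul, Matrix.det_mul, Matrix.det_transpose, hL, Matrix.det_diagonal,
    one_mul, mul_one, Fin.prod_univ_eq_prod_range (fun k => ∏ m ∈ range k, l m)]
  clear hfac hL
  induction n with
  | zero => simp
  | succ n ih =>
    rw [prod_range_succ, ih, prod_range_succ _ n, prod_range_succ _ n, ← mul_assoc,
      ← prod_mul_distrib]
    congr 1
    · refine prod_congr rfl fun k hk => ?_
      rw [mem_range] at hk
      rw [← pow_succ]
      congr 1; omega
    · simp

/-! ### The continued fraction of the q-Narayana series -/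

/-- The q-Narayana polynomials `C_n(a,b,q)`, as a function of their parameters. -/
def nar (a b q : R) : ℕ → R
  | 0 => 1
  | n + 1 => a * nar a b q n
      + b * ∑ k : Fin (n + 1), q ^ k.val * nar a b q k.val * nar a b q (n - k.val)

/-- The generating function `∑ C_n(a,b,q) Xⁿ`. -/
noncomputable def narSeries (a b q : R) : R⟦X⟧ := PowerSeries.mk (nar a b q)

lemma coeff_succ_funEq (a b q : R) (V : R⟦X⟧) (n : ℕ) :
    coeff (n + 1) (1 + C a * X * V + C b * X * V * rescale q V)
      = a * coeff n V + b * ∑ k ∈ range (n + 1), q ^ k * coeff k V * coeff (n - k) V := by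
  have h : 1 + C a * X * V + C b * X * V * rescale q V
      = 1 + X * (C a * V) + X * (C b * (rescale q V * V)) := by ring
  rw [h]
  simp only [map_add, coeff_succ_X_mul, coeff_C_mul, coeff_one, coeff_mul (n) (rescale q V) V,
    Finset.Nat.sum_antidiagonal_eq_sum_range_succ_mk, coeff_rescale]
  simp

lemma narSeries_funEq (a b q : R) :
    narSeries a b q = 1 + C a * X * narSeries a b q
      + C b * X * narSeries a b q * rescale q (narSeries a b q) := by
  ext n
  cases n with
  | zero => simp [narSeries, nar, mul_assoc]
  | succ n =>
    rw [coeff_succ_funEq]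
    simp only [narSeries, coeff_mk]
    rw [nar, Fin.sum_univ_eq_sum_range (fun k => q ^ k * nar a b q k * nar a b q (n - k))]

/-- A sequence satisfying the defining recurrence is the sequence of q-Narayana polynomials. -/
lemma eq_nar (a b q : R) (c : ℕ → R) (h0 : c 0 = 1)
    (h : ∀ n, c (n + 1) = a * c n + b * ∑ k ∈ range (n + 1), q ^ k * c k * c (n - k)) (n : ℕ) :
    c n = nar a b q n := by
  induction n using Nat.strong_induction_on with
  | _ n ih =>
    cases n with
    | zero => rw [h0, nar]
    | succ n =>
      rw [h, nar, Fin.sum_univ_eq_sum_range (fun k => q ^ k * nar a b q k * nar a b q (n - k)),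
        ih n (by omega)]
      congr 2
      refine sum_congr rfl fun k hk => ?_
      rw [mem_range] at hk
      rw [ih k (by omega), ih (n - k) (by omega)]

lemma eq_narSeries (a b q : R) (V : R⟦X⟧)
    (hV : V = 1 + C a * X * V + C b * X * V * rescale q V) : V = narSeries a b q := by
  ext n
  rw [narSeries, coeff_mk]
  refine eq_nar a b q (fun n => coeff n V) ?_ (fun n => ?_) n
  · rw [hV]; simp [mul_assoc]
  · conv_lhs => rw [hV]
    exact coeff_succ_funEq a b q V n

lemma rescale_C (q c : R) : rescale q (C c : R⟦X⟧) = C c := by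
  ext n
  rw [coeff_rescale, coeff_C]
  split_ifs with h <;> simp [h]

lemma rescale_narSeries (a b q : R) :
    rescale q (narSeries a b q) = narSeries (q * a) (q * b) q := by
  apply eq_narSeries
  have h := congrArg (rescale q) (narSeries_funEq a b q)
  simp only [map_add, map_mul, map_one, rescale_X, rescale_C] at h ⊢
  linear_combination h

/-- The series `G / (1 - c X G)`. -/
noncomputable def tail (c : R) (G : R⟦X⟧) : R⟦X⟧ := G * invOfUnit (1 - C c * X * G) 1

lemma isUnit_one_sub (c : R) (G : R⟦X⟧) : IsUnit (1 - C c * X * G) :=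
  isUnit_iff_constantCoeff.2 (by simp)

lemma tail_mul (c : R) (G : R⟦X⟧) : tail c G * (1 - C c * X * G) = G := by
  rw [tail, mul_assoc, mul_comm (invOfUnit _ _), mul_invOfUnit _ _ (by simp), mul_one]

/-- The relation between `P(a,b)` and `P(a,qb)` behind the continued fraction. -/
lemma narSeries_eq (a b q : R) :
    narSeries a b q = 1 + C (a + b) * X * tail b (narSeries a (q * b) q) := by
  symm
  apply eq_narSeries
  have hS := narSeries_funEq a (q * b) q
  have hT := tail_mul b (narSeries a (q * b) q)
  have hTq := congrArg (rescale q) hT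
  have hu := isUnit_one_sub b (narSeries a (q * b) q)
  have huq := hu.map (rescale q)
  generalize narSeries a (q * b) q = S at *
  generalize tail b S = T at *
  simp only [map_add, map_mul, map_sub, map_one, rescale_X, rescale_C] at *
  generalize rescale q S = S' at *
  generalize rescale q T = T' at *
  -- Multiplying by both denominators turns `T`, `T'` into `S`, `S'`.
  apply (hu.mul huq).mul_left_cancel
  linear_combination
    ((C a + C b) * X * ((1 - C b * (C q * X) * S') * (1 - C a * X)
      - C b * X * (1 - C b * (C q * X) * S' + (C a + C b) * (C q * X) * T'
        * (1 - C b * (C q * X) * S')))) * hT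
    - C b * X * (1 + C a * X * S) * (C a + C b) * (C q * X) * hTq
    + (C a + C b) * X * hS

/-- One level of the continued fraction: `narSeries_eq` applied to `P(a,b)(qX) = P(qa,qb)`, which
is then substituted into the functional equation of `P(a,b)`. -/
lemma narSeries_step (a b q : R) :
    narSeries a b q = 1 + C (a + b) * X * narSeries a b q
      + C ((a + b) * (q * b)) * X ^ 2 * narSeries a b q
        * tail (q * b) (narSeries (q * a) (q ^ 2 * b) q) := by
  have h := narSeries_funEq a b q
  rw [rescale_narSeries, narSeries_eq (q * a) (q * b) q, ← mul_assoc q q b, ← pow_two] at h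
  simp only [map_add, map_mul] at h ⊢
  linear_combination h

/-- The coefficient `c` for which the `k`-th tail of the J-fraction is `G / (1 - c X G)` with
`G = P(q^k a, q^(2k) b)`. At the top level it is `0`, so that tail is `P(a,b)` itself. -/
def shift (b q : R) : ℕ → R
  | 0 => 0
  | k + 1 => q * (q ^ (2 * k) * b)

/-- The tails of the J-fraction of `P(a,b)`. -/
noncomputable def tails (a b q : R) (k : ℕ) : R⟦X⟧ :=
  tail (shift b q k) (narSeries (q ^ k * a) (q ^ (2 * k) * b) q)

lemma tails_zero (a b q : R) : tails a b q 0 = narSeries a b q := by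
  have h := tail_mul 0 (narSeries a b q)
  simpa [tails, shift] using h

lemma tails_jfraction (a b q : R) (k : ℕ) :
    tails a b q k = 1 + C (shift b q k + (q ^ k * a + q ^ (2 * k) * b)) * X * tails a b q k
      + C ((q ^ k * a + q ^ (2 * k) * b) * (q * (q ^ (2 * k) * b))) * X ^ 2 * tails a b q k
        * tails a b q (k + 1) := by
  have h := narSeries_step (q ^ k * a) (q ^ (2 * k) * b) q
  have e : tail (q * (q ^ (2 * k) * b))
      (narSeries (q * (q ^ k * a)) (q ^ 2 * (q ^ (2 * k) * b)) q) = tails a b q (k + 1) := by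
    rw [tails, shift]
    congr 2 <;> ring
  rw [e] at h
  have hT := tail_mul (shift b q k) (narSeries (q ^ k * a) (q ^ (2 * k) * b) q)
  change tails a b q k * _ = _ at hT
  generalize tails a b q (k + 1) = T' at *
  generalize tails a b q k = T at *
  generalize narSeries (q ^ k * a) (q ^ (2 * k) * b) q = G at *
  rw [map_add]
  generalize C (shift b q k) = c at *
  generalize C (q ^ k * a + q ^ (2 * k) * b) = d at *
  generalize C ((q ^ k * a + q ^ (2 * k) * b) * (q * (q ^ (2 * k) * b))) = d' at *
  linear_combination (1 + c * X * T) * h + (1 - d * X - d' * X ^ 2 * T') * hT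

/-! ### Exponents -/

/-- The exponent of `q` in `∏ λ_k^(n-k)`, where `λ_k = q^(3k+1) b (a + q^k b)`. -/
lemma sum_exponents (n : ℕ) :
    ∑ k ∈ range n, (3 * k + 1) * (n - k) = n ^ 2 * (n + 1) / 2 := by
  have h1 : ∀ n, 2 * ∑ k ∈ range n, (3 * k + 1) = n * (3 * n - 1) := by
    intro n
    induction n with
    | zero => simp
    | succ n ih =>
      rw [sum_range_succ, mul_add, ih]
      cases n with
      | zero => simp
      | succ n =>
        rw [show 3 * (n + 1) - 1 = 3 * n + 2 by omega,
          show 3 * (n + 1 + 1) - 1 = 3 * n + 5 by omega]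
        ring
  have h2 : 2 * ∑ k ∈ range n, (3 * k + 1) * (n - k) = n ^ 2 * (n + 1) := by
    induction n with
    | zero => simp
    | succ n ih =>
      have e : ∑ k ∈ range (n + 1), (3 * k + 1) * (n + 1 - k)
          = ∑ k ∈ range n, (3 * k + 1) * (n - k) + ∑ k ∈ range (n + 1), (3 * k + 1) := by
        rw [sum_range_succ, sum_range_succ _ n, ← add_assoc, ← sum_add_distrib]
        congr 1
        · refine sum_congr rfl fun k hk => ?_
          rw [mem_range] at hk
          rw [show n + 1 - k = n - k + 1 by omega]; ring
        · simp
      rw [e, mul_add, ih, h1, show 3 * (n + 1) - 1 = 3 * n + 2 by omega]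
      ring
  omega

lemma sum_sub (n : ℕ) : ∑ k ∈ range n, (n - k) = n * (n + 1) / 2 := by
  have h := sum_range_reflect (fun k => k) (n + 1)
  rw [sum_range_id, Nat.add_sub_cancel, sum_range_succ] at h
  rw [mul_comm n]
  simpa using h

end QNarayana

/-- Hankel determinant of the q-Narayana polynomials:
`det(C_{i+j})_{i,j=0}^n = q^{n²(n+1)/2} · b^{n(n+1)/2} · ∏_{i=0}^{n−1} (a + q^i b)^{n−i}`. -/
theorem stmt_8 {R : Type*} [CommRing R] (a b q : R) (Cat : ℕ → R)
    (hC0 : Cat 0 = 1)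
    (hC : ∀ n : ℕ, 1 ≤ n →
      Cat n = a * Cat (n - 1) + b * ∑ k ∈ range n, q ^ k * Cat k * Cat (n - k - 1)) :
    ∀ n : ℕ,
      Matrix.det (Matrix.of fun i j : Fin (n + 1) => Cat (i.val + j.val))
        = q ^ (n ^ 2 * (n + 1) / 2) * b ^ (n * (n + 1) / 2) *
            ∏ i ∈ range n, (a + q ^ i * b) ^ (n - i) := by
  intro n
  have hCat : ∀ m, Cat m = PowerSeries.coeff m (QNarayana.tails a b q 0) := by
    intro m
    rw [QNarayana.tails_zero, QNarayana.narSeries, PowerSeries.coeff_mk]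
    refine QNarayana.eq_nar a b q Cat hC0 (fun m => ?_) m
    rw [hC (m + 1) (by omega), Nat.add_sub_cancel]
    congr 2
    refine sum_congr rfl fun k _ => ?_
    rw [show m + 1 - k - 1 = m - k by omega]
  simp only [hCat]
  rw [QNarayana.hankel_det_jfraction (QNarayana.tails_jfraction a b q),
    ← QNarayana.sum_exponents, ← QNarayana.sum_sub, ← prod_pow_eq_pow_sum, ← prod_pow_eq_pow_sum,
    ← prod_mul_distrib, ← prod_mul_distrib]
  refine prod_congr rfl fun k _ => ?_
  rw [pow_mul q (3 * k + 1), ← mul_pow, ← mul_pow]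
  congr 1
  ring
end

section
/- For every n ≥ 0, the shifted Hankel determinant of the q-Narayana polynomials satisfies det(C_{i+j+1}(a,b,q))_{i,j=0}^{n} = q^{n(n+1)²/2} · b^{n(n+1)/2} · ∏_{i=0}^{n} (a + q^i b)^{n+1−i}. -/
open Finset

/-!
Write `F_b(z) = ∑ C_n(a,b,q) zⁿ`. The recurrence says `F_b(z) = 1 + z F_b(z) (a + b F_b(qz))`.
The key fact is the second functional equation
`F_b(z) = 1 + z F_{qb}(z) (a + b F_b(z))` (`series_eq_shift`): the defect `W(z)` of this equation
satisfies `W(z) = z b F_b(z) F_{qb}(z) W(qz)`, hence vanishes coefficient by coefficient.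
With `G(z) = a + b F_b(qz)` the two equations give
`F_b = 1 / (1 - z G(z))` and `G = (a + b) / (1 - z q b F_{qb}(qz))`,
which is two steps of a Stieltjes continued fraction.

On Hankel matrices, a relation `F = 1 + z F G` means that `(F_{i+j+1}) = L (G_{i+j}) Lᵀ` and
`(F_{i+j}) = L (1 ⊕ (G_{i+j+1})) Lᵀ`, where `L` is the unitriangular Toeplitz matrix of the
coefficients of `F` (`det_hankel_succ`, `det_hankel`). Thus, for `D_n(b) = det (C_{i+j+1}(a,b,q))`
of size `n + 1`,
`D_{n+1}(b) = (a + b)^(n+2) q^((n+1)(n+2)) b^(n+1) D_n(q b)`, and the formula follows by induction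
on `n`, for all `b` at once. No division by `a + b`, `b` or `q` is needed.
-/

/-- The `q`-Narayana polynomials, defined for all parameters by their recurrence. -/
def qNar {R : Type*} [CommRing R] (a b q : R) : ℕ → R
  | 0 => 1
  | n + 1 => a * qNar a b q n +
      b * ∑ k : Fin (n + 1), q ^ k.val * qNar a b q k.val * qNar a b q (n - k.val)
decreasing_by all_goals omega

/-- The `(i, j)` entry of `L N Lᵀ`, where `L` is the lower triangular Toeplitz matrix with entries
`u (i - p)`, and all the matrices are infinite. -/
def toepConj {R : Type*} [CommRing R] (u : ℕ → R) (N : ℕ → ℕ → R) (i j : ℕ) : R :=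
  ∑ p ∈ range (i + 1), ∑ r ∈ range (j + 1), u (i - p) * u (j - r) * N p r

theorem toepConj_succ_left {R : Type*} [CommRing R] (u : ℕ → R) (N : ℕ → ℕ → R) (i j : ℕ) :
    toepConj u N (i + 1) j = u (i + 1) * (∑ r ∈ range (j + 1), u (j - r) * N 0 r) +
      toepConj u (fun p r => N (p + 1) r) i j := by
  unfold toepConj
  rw [Finset.sum_range_succ' _ (i + 1), add_comm, Finset.mul_sum]
  simp [mul_assoc]

theorem toepConj_succ_right {R : Type*} [CommRing R] (u : ℕ → R) (N : ℕ → ℕ → R) (i j : ℕ) :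
    toepConj u N i (j + 1) = u (j + 1) * (∑ p ∈ range (i + 1), u (i - p) * N p 0) +
      toepConj u (fun p r => N p (r + 1)) i j := by
  unfold toepConj
  rw [Finset.mul_sum, ← Finset.sum_add_distrib]
  refine Finset.sum_congr rfl fun p _ => ?_
  rw [Finset.sum_range_succ' _ (j + 1), add_comm]
  simp only [Nat.add_sub_add_right, Nat.sub_zero]
  ring

/-- Two arrays agree if their first rows agree and both are constant along antidiagonals. -/
theorem hankel_ext {R : Type*} (A : ℕ → ℕ → R) (s : ℕ → R)
    (h0 : ∀ j, A 0 j = s j) (h : ∀ i j, A (i + 1) j = A i (j + 1)) (i j : ℕ) :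
    A i j = s (i + j) := by
  induction i generalizing j with
  | zero => rw [h0, Nat.zero_add]
  | succ i ih => rw [h, ih]; congr 1; omega

theorem sum_toeplitz_row {R : Type*} [CommRing R] (u f : ℕ → R) (n i : ℕ) (hi : i < n) :
    ∑ p : Fin n, (if p.val ≤ i then u (i - p.val) else 0) * f p.val =
      ∑ p ∈ range (i + 1), u (i - p) * f p := by
  rw [Fin.sum_univ_eq_sum_range (fun p => (if p ≤ i then u (i - p) else 0) * f p) n]
  rw [← Finset.sum_subset (s₁ := range (i + 1))]
  · refine Finset.sum_congr rfl fun p hp => ?_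
    rw [if_pos (by simp at hp; omega)]
  · intro p hp
    simp at hp ⊢
    omega
  · intro p _ hp
    rw [if_neg (by simp at hp; omega), zero_mul]

/-- Conjugation by a unitriangular Toeplitz matrix preserves the leading principal minors. -/
theorem det_toepConj {R : Type*} [CommRing R] (u : ℕ → R) (hu : u 0 = 1) (N : ℕ → ℕ → R) (n : ℕ) :
    Matrix.det (Matrix.of fun i j : Fin n => toepConj u N i.val j.val) =
      Matrix.det (Matrix.of fun i j : Fin n => N i.val j.val) := by
  let L : Matrix (Fin n) (Fin n) R :=
    Matrix.of fun i p => if p.val ≤ i.val then u (i.val - p.val) else 0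
  have hL : L.det = 1 := by
    rw [Matrix.det_of_isLowerTriangular]
    · simp [L, hu]
    · intro i j hij
      have : i < j := hij
      simp only [L, Matrix.of_apply]
      exact if_neg (by simpa using this)
  have key : (Matrix.of fun i j : Fin n => toepConj u N i.val j.val) =
      L * (Matrix.of fun i j : Fin n => N i.val j.val) * L.transpose := by
    ext i j
    rw [Matrix.mul_assoc, Matrix.mul_apply]
    simp only [Matrix.mul_apply, Matrix.transpose_apply, Matrix.of_apply, L, toepConj]
    have h1 : ∀ p : Fin n, ∑ r : Fin n, N p.val r.val *
        (if r.val ≤ j.val then u (j.val - r.val) else 0) =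
        ∑ r ∈ range (j.val + 1), u (j.val - r) * N p.val r := fun p => by
      rw [← sum_toeplitz_row u (N p.val) n j.val j.isLt]
      exact Finset.sum_congr rfl fun r _ => mul_comm _ _
    simp only [h1]
    rw [sum_toeplitz_row u (fun p => ∑ r ∈ range (j.val + 1), u (j.val - r) * N p r) n i.val
      i.isLt]
    refine Finset.sum_congr rfl fun p _ => ?_
    rw [Finset.mul_sum]
    exact Finset.sum_congr rfl fun r _ => mul_assoc _ _ _
  rw [key, Matrix.det_mul, Matrix.det_mul, Matrix.det_transpose, hL, one_mul, mul_one]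

/-- If `F = 1 + z F G` as power series, the shifted Hankel determinants of `F` are the Hankel
determinants of `G`. -/
theorem det_hankel_succ {R : Type*} [CommRing R] (f g : ℕ → R) (h0 : f 0 = 1)
    (hs : ∀ n, f (n + 1) = ∑ r ∈ range (n + 1), f (n - r) * g r) (n : ℕ) :
    Matrix.det (Matrix.of fun i j : Fin n => f (i.val + j.val + 1)) =
      Matrix.det (Matrix.of fun i j : Fin n => g (i.val + j.val)) := by
  rw [← det_toepConj f h0 (fun p r => g (p + r)) n]
  congr 1
  ext i j
  refine (hankel_ext (toepConj f fun p r => g (p + r)) (fun m => f (m + 1)) ?_ ?_ _ _).symm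
  · intro j
    simp [toepConj, h0, hs]
  · intro i j
    rw [toepConj_succ_left, toepConj_succ_right]
    simp only [zero_add, add_zero, ← hs]
    rw [mul_comm]
    congr 2
    ext p r
    congr 1
    omega

/-- The infinite matrix `1 ⊕ (h_{i+j+1})`. -/
def borderHankel {R : Type*} [CommRing R] (h : ℕ → R) : ℕ → ℕ → R
  | 0, 0 => 1
  | 0, _ + 1 => 0
  | _ + 1, 0 => 0
  | p + 1, r + 1 => h (p + r + 1)

/-- The failure of `1 ⊕ (h_{i+j+1})` to be a Hankel matrix has rank at most two. -/
theorem borderHankel_shift {R : Type*} [CommRing R] (h : ℕ → R) (p r : ℕ) :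
    borderHankel h (p + 1) r = borderHankel h p (r + 1) +
      ((if p = 0 then h r else 0) - (if r = 0 then h p else 0)) := by
  rcases p with _ | p <;> rcases r with _ | r <;> simp [borderHankel]
  congr 1
  omega

/-- If `K = 1 + z K H` as power series, the Hankel determinants of `K` are the shifted Hankel
determinants of `H` of one size less. -/
theorem det_hankel {R : Type*} [CommRing R] (k h : ℕ → R) (h0 : k 0 = 1)
    (hs : ∀ n, k (n + 1) = ∑ r ∈ range (n + 1), k (n - r) * h r) (n : ℕ) :
    Matrix.det (Matrix.of fun i j : Fin (n + 1) => k (i.val + j.val)) =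
      Matrix.det (Matrix.of fun i j : Fin n => h (i.val + j.val + 1)) := by
  have hrow : ∀ j, ∑ r ∈ range (j + 1), k (j - r) * borderHankel h 0 r = k j := fun j => by
    rw [Finset.sum_range_succ']
    simp [borderHankel]
  have hcol : ∀ j, ∑ r ∈ range (j + 1), k (j - r) * borderHankel h r 0 = k j := fun j => by
    rw [Finset.sum_range_succ']
    simp [borderHankel]
  have key : (Matrix.of fun i j : Fin (n + 1) => k (i.val + j.val)) =
      Matrix.of fun i j : Fin (n + 1) => toepConj k (borderHankel h) i.val j.val := by
    ext i j
    refine (hankel_ext (toepConj k (borderHankel h)) k ?_ ?_ _ _).symm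
    · intro j
      simpa [toepConj, h0] using hrow j
    · intro i j
      rw [toepConj_succ_left, toepConj_succ_right, hrow, hcol]
      have e1 : toepConj k (fun p r => if p = 0 then h r else 0) i j = k i * k (j + 1) := by
        rw [hs j, Finset.mul_sum, toepConj, Finset.sum_range_succ']
        simp [mul_assoc]
      have e2 : toepConj k (fun p r => if r = 0 then h p else 0) i j = k (i + 1) * k j := by
        rw [hs i, Finset.sum_mul, toepConj]
        refine Finset.sum_congr rfl fun p _ => ?_
        rw [Finset.sum_range_succ']
        simp
        ring
      have e3 : toepConj k (fun p r => borderHankel h (p + 1) r) i j =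
          toepConj k (fun p r => borderHankel h p (r + 1)) i j +
          (toepConj k (fun p r => if p = 0 then h r else 0) i j -
            toepConj k (fun p r => if r = 0 then h p else 0) i j) := by
        simp only [toepConj, borderHankel_shift, mul_add, mul_sub, Finset.sum_add_distrib,
          Finset.sum_sub_distrib]
      rw [e3, e1, e2]
      ring
  rw [key, det_toepConj k h0, Matrix.det_succ_row_zero, Fin.sum_univ_succ]
  simp [borderHankel]
  rfl

/-- The coefficient form of `F = 1 + z F G`. -/
theorem coeff_succ_of_eq {R : Type*} [CommRing R] (F G : PowerSeries R)
    (h : F = 1 + PowerSeries.X * (F * G)) (n : ℕ) :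
    PowerSeries.coeff (n + 1) F =
      ∑ r ∈ range (n + 1), PowerSeries.coeff (n - r) F * PowerSeries.coeff r G := by
  conv_lhs => rw [h]
  rw [map_add, PowerSeries.coeff_succ_X_mul, mul_comm F G, PowerSeries.coeff_mul,
    Finset.Nat.sum_antidiagonal_eq_sum_range_succ_mk]
  simp [PowerSeries.coeff_one, mul_comm]

theorem coeff_zero_of_eq {R : Type*} [CommRing R] (F G : PowerSeries R)
    (h : F = 1 + PowerSeries.X * (F * G)) : PowerSeries.coeff 0 F = 1 := by
  rw [h]
  simp

theorem series_eq {R : Type*} [CommRing R] (a b q : R) :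
    PowerSeries.mk (qNar a b q) = 1 + PowerSeries.X * (PowerSeries.mk (qNar a b q) *
      (PowerSeries.C a +
        PowerSeries.C b * PowerSeries.rescale q (PowerSeries.mk (qNar a b q)))) := by
  ext n
  rcases n with _ | n
  · simp [qNar]
  · rw [map_add, PowerSeries.coeff_succ_X_mul, mul_add, mul_left_comm, mul_comm _ (PowerSeries.C a),
      map_add, PowerSeries.coeff_C_mul, PowerSeries.coeff_C_mul,
      mul_comm (PowerSeries.mk (qNar a b q)) (PowerSeries.rescale _ _),
      PowerSeries.coeff_mul, Finset.Nat.sum_antidiagonal_eq_sum_range_succ_mk,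
      PowerSeries.coeff_mk, qNar,
      Fin.sum_univ_eq_sum_range (fun k => q ^ k * qNar a b q k * qNar a b q (n - k)) (n + 1)]
    simp [PowerSeries.coeff_one, PowerSeries.coeff_rescale]

/-- A power series with `W(z) = z U(z) W(qz)` vanishes. -/
theorem eq_zero_of_rescale {R : Type*} [CommRing R] (q : R) (W U : PowerSeries R)
    (h : W = PowerSeries.X * (U * PowerSeries.rescale q W)) : W = 0 := by
  ext n
  induction n using Nat.strong_induction_on with
  | _ n ih =>
    rw [h]
    rcases n with _ | n
    · simp
    · rw [PowerSeries.coeff_succ_X_mul, PowerSeries.coeff_mul, map_zero]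
      refine Finset.sum_eq_zero fun p hp => ?_
      have hp' := Finset.HasAntidiagonal.mem_antidiagonal.mp hp
      rw [PowerSeries.coeff_rescale, ih p.2 (by omega)]
      simp

/-- The second functional equation `F_b(z) = 1 + z F_{qb}(z) (a + b F_b(z))`. -/
theorem series_eq_shift {R : Type*} [CommRing R] (a b q : R) :
    PowerSeries.mk (qNar a b q) = 1 + PowerSeries.X * (PowerSeries.mk (qNar a (q * b) q) *
      (PowerSeries.C a + PowerSeries.C b * PowerSeries.mk (qNar a b q))) := by
  have hF := series_eq a b q
  have hH := series_eq a (q * b) q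
  set F := PowerSeries.mk (qNar a b q)
  set H := PowerSeries.mk (qNar a (q * b) q)
  rw [← sub_eq_zero]
  apply eq_zero_of_rescale q _ (PowerSeries.C b * F * H)
  have hX : PowerSeries.rescale q (PowerSeries.X : PowerSeries R) =
      PowerSeries.C q * PowerSeries.X := PowerSeries.rescale_X q
  have hc : ∀ c : R, PowerSeries.rescale q (PowerSeries.C c) = PowerSeries.C c := fun c => by
    ext n
    rw [PowerSeries.coeff_rescale, PowerSeries.coeff_C]
    split_ifs with h <;> simp [h]
  simp only [map_sub, map_add, map_mul, map_one, hX, hc] at hH ⊢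
  generalize PowerSeries.rescale q F = Fq at *
  generalize PowerSeries.rescale q H = Hq at *
  generalize PowerSeries.C a = A at *
  generalize PowerSeries.C b = B at *
  generalize PowerSeries.C q = Q at *
  generalize (PowerSeries.X : PowerSeries R) = z at *
  -- `hF` and `hH` say that `F` and `H` are inverse to `1 - z (A + B Fq)` and
  -- `1 - z (A + Q B Hq)`; both sides are compared after multiplying by these inverses.
  linear_combination (1 - F) * hH + (H * (1 - z * A - z * Q * B * Hq) + z * A * H) * hF

/-- Two continued fraction steps: the shifted Hankel determinants at `b` and at `q b`. -/
theorem det_step {R : Type*} [CommRing R] (a b q : R) (n : ℕ) :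
    Matrix.det (Matrix.of fun i j : Fin (n + 2) => qNar a b q (i.val + j.val + 1)) =
      (a + b) ^ (n + 2) * (q ^ ((n + 1) * (n + 2)) * b ^ (n + 1)) *
      Matrix.det (Matrix.of fun i j : Fin (n + 1) => qNar a (q * b) q (i.val + j.val + 1)) := by
  have hF := series_eq a b q
  have hS := congrArg (PowerSeries.rescale q) (series_eq_shift a b q)
  have hX : PowerSeries.rescale q (PowerSeries.X : PowerSeries R) =
      PowerSeries.C q * PowerSeries.X := PowerSeries.rescale_X q
  have hc : ∀ c : R, PowerSeries.rescale q (PowerSeries.C c) = PowerSeries.C c := fun c => by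
    ext n
    rw [PowerSeries.coeff_rescale, PowerSeries.coeff_C]
    split_ifs with h <;> simp [h]
  simp only [map_add, map_mul, map_one, hX, hc] at hS
  set G := PowerSeries.C a +
    PowerSeries.C b * PowerSeries.rescale q (PowerSeries.mk (qNar a b q)) with hG
  set H : PowerSeries R := PowerSeries.C (q * b) *
    PowerSeries.rescale q (PowerSeries.mk (qNar a (q * b) q)) with hH
  -- `K = 1 / (1 - z H)`, so that `G = (a + b) K` although `a + b` need not be invertible.
  obtain ⟨K, hK⟩ : ∃ K : PowerSeries R, (1 - PowerSeries.X * H) * K = 1 := by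
    have : IsUnit (1 - PowerSeries.X * H) := by
      rw [PowerSeries.isUnit_iff_constantCoeff]
      simp
    exact this.exists_right_inv
  have hK' : K = 1 + PowerSeries.X * (K * H) := by linear_combination hK
  have hGK : G = PowerSeries.C (a + b) * K := by
    have h1 : G * (1 - PowerSeries.X * H) = PowerSeries.C (a + b) := by
      rw [hH, map_mul, map_add]
      linear_combination PowerSeries.C b * hS + hG
    rw [← h1, mul_assoc, hK, mul_one]
  have d1 := det_hankel_succ (qNar a b q) (fun m => PowerSeries.coeff m G)
    (by simp [qNar]) (fun m => by simpa using coeff_succ_of_eq _ _ hF m) (n + 2)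
  have d2 := det_hankel (fun m => PowerSeries.coeff m K) (fun m => PowerSeries.coeff m H)
    (coeff_zero_of_eq _ _ hK') (coeff_succ_of_eq _ _ hK') (n + 1)
  have e1 : (Matrix.of fun i j : Fin (n + 2) => PowerSeries.coeff (i.val + j.val) G) =
      (a + b) • Matrix.of fun i j : Fin (n + 2) => PowerSeries.coeff (i.val + j.val) K := by
    ext i j
    rw [hGK]
    simp only [Matrix.of_apply, Matrix.smul_apply, PowerSeries.coeff_C_mul, smul_eq_mul]
  have e2 : (Matrix.of fun i j : Fin (n + 1) => PowerSeries.coeff (i.val + j.val + 1) H) =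
      (q ^ 2 * b) • Matrix.of fun i j : Fin (n + 1) => q ^ i.val *
        (Matrix.of fun i j : Fin (n + 1) => q ^ j.val *
          (Matrix.of fun i j : Fin (n + 1) => qNar a (q * b) q (i.val + j.val + 1)) i j) i j := by
    ext i j
    rw [hH]
    simp only [Matrix.of_apply, Matrix.smul_apply, PowerSeries.coeff_C_mul, smul_eq_mul,
      PowerSeries.coeff_rescale, PowerSeries.coeff_mk]
    ring
  rw [d1, e1, Matrix.det_smul, d2, e2, Matrix.det_smul, Matrix.det_mul_column, Matrix.det_mul_row,
    Fin.prod_univ_eq_prod_range (fun i => q ^ i) (n + 1), Finset.prod_pow_eq_pow_sum]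
  simp only [Fintype.card_fin]
  have hs : (n + 1) * (n + 2) = 2 * (n + 1) + (∑ i ∈ range (n + 1), i) * 2 := by
    rw [Finset.sum_range_id_mul_two, Nat.add_sub_cancel]
    ring
  rw [hs]
  ring

theorem qNar_det {R : Type*} [CommRing R] (a q : R) (n : ℕ) : ∀ b : R,
    Matrix.det (Matrix.of fun i j : Fin (n + 1) => qNar a b q (i.val + j.val + 1))
        = q ^ (n * (n + 1) ^ 2 / 2) * b ^ (n * (n + 1) / 2) *
            ∏ i ∈ range (n + 1), (a + q ^ i * b) ^ (n + 1 - i) := by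
  induction n with
  | zero => intro b; simp [qNar]
  | succ n ih =>
    intro b
    rw [det_step, ih, Finset.prod_range_succ' _ (n + 1)]
    obtain ⟨t, ht⟩ : 2 ∣ n * (n + 1) := (Nat.even_mul_succ_self n).two_dvd
    have x1 : n * (n + 1) / 2 = t := by omega
    have x2 : (n + 1) * (n + 1 + 1) / 2 = t + (n + 1) := by
      have : (n + 1) * (n + 1 + 1) = 2 * (t + (n + 1)) := by linarith
      omega
    have x3 : n * (n + 1) ^ 2 / 2 = t * (n + 1) := by
      have : n * (n + 1) ^ 2 = 2 * (t * (n + 1)) := by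
        rw [pow_two, ← mul_assoc, ht]; ring
      omega
    have x4 : (n + 1) * (n + 1 + 1) ^ 2 / 2 = t * (n + 1) + t + (n + 1) * (n + 2) := by
      have : (n + 1) * (n + 1 + 1) ^ 2 = 2 * (t * (n + 1) + t + (n + 1) * (n + 2)) := by
        calc (n + 1) * (n + 1 + 1) ^ 2
            = n * (n + 1) * (n + 1) + n * (n + 1) + 2 * ((n + 1) * (n + 2)) := by ring
          _ = _ := by rw [ht]; ring
      omega
    rw [x1, x2, x3, x4]
    have hp : ∏ i ∈ range (n + 1), (a + q ^ (i + 1) * b) ^ (n + 1 + 1 - (i + 1)) =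
        ∏ i ∈ range (n + 1), (a + q ^ i * (q * b)) ^ (n + 1 - i) := by
      refine Finset.prod_congr rfl fun i _ => ?_
      rw [Nat.add_sub_add_right]
      ring
    rw [hp]
    simp only [pow_zero, one_mul, Nat.sub_zero, mul_pow]
    ring

theorem eq_qNar {R : Type*} [CommRing R] (a b q : R) (Cat : ℕ → R)
    (hC0 : Cat 0 = 1)
    (hC : ∀ n : ℕ, 1 ≤ n →
      Cat n = a * Cat (n - 1) + b * ∑ k ∈ range n, q ^ k * Cat k * Cat (n - k - 1)) (n : ℕ) :
    Cat n = qNar a b q n := by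
  induction n using Nat.strong_induction_on with
  | _ n ih =>
    rcases n with _ | n
    · rw [hC0, qNar]
    · rw [hC (n + 1) (by omega), qNar,
        Fin.sum_univ_eq_sum_range (fun k => q ^ k * qNar a b q k * qNar a b q (n - k)) (n + 1),
        Nat.add_sub_cancel, ih n (by omega)]
      congr 2
      refine Finset.sum_congr rfl fun k hk => ?_
      have hk' := Finset.mem_range.mp hk
      rw [ih k hk', ih (n + 1 - k - 1) (by omega)]
      congr 2
      omega

/-- Shifted Hankel determinant of the q-Narayana polynomials:
`det(C_{i+j+1})_{i,j=0}^n = q^{n(n+1)²/2} · b^{n(n+1)/2} · ∏_{i=0}^{n} (a + q^i b)^{n+1−i}`. -/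
theorem stmt_9 {R : Type*} [CommRing R] (a b q : R) (Cat : ℕ → R)
    (hC0 : Cat 0 = 1)
    (hC : ∀ n : ℕ, 1 ≤ n →
      Cat n = a * Cat (n - 1) + b * ∑ k ∈ range n, q ^ k * Cat k * Cat (n - k - 1)) :
    ∀ n : ℕ,
      Matrix.det (Matrix.of fun i j : Fin (n + 1) => Cat (i.val + j.val + 1))
        = q ^ (n * (n + 1) ^ 2 / 2) * b ^ (n * (n + 1) / 2) *
            ∏ i ∈ range (n + 1), (a + q ^ i * b) ^ (n + 1 - i) := by
  intro n
  simp only [eq_qNar a b q Cat hC0 hC]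
  exact qNar_det a q n b
end

section
/- For every n ≥ 0, the Hankel determinants of the Carlitz–Riordan q-Catalan numbers satisfy det(C_{i+j}(q))_{i,j=0}^{n} = q^{n(n+1)(4n−1)/6} and det(C_{i+j+1}(q))_{i,j=0}^{n} = q^{n(n+1)(4n+5)/6} (both exponents are integers). -/
/-!
Let `F = ∑ Cₙ xⁿ`. The recurrence says `F(x) = 1 + x F(x) F(qx)`, so with `F_k(x) = F(q^k x)` one has
`F_k = 1 + q^k x F_k F_{k+1}`; this is the Stieltjes continued fraction of `F` with coefficients
`1, q, q², …`. Put `P_k = F_0 F_1 ⋯ F_k` and let `E i l`, `O i l` be the coefficients of `x^i` in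
`x^l P_{2l}` and `x^l P_{2l+1}` (weighted counts of partial Dyck paths of length `2i` ending at
height `2l`, and of length `2i+1` ending at height `2l+1`). Multiplying the equation for `F_k` by
`P_{k-1}` gives the step relations
`O i l = E i l + q^{2l+1} E i (l+1)` and `E (i+1) l = O i (l-1) + q^{2l} O i l`.

With `w_k = q^{0+1+⋯+(k-1)}`, summation by parts then yields
`∑_l E (i+1) l w_{2l} E j l = ∑_l O i l w_{2l+1} O j l`. The right side is symmetric in `i, j`, hence
`∑_l E i l w_{2l} E j l` depends on `i + j` only, and equals `C_{i+j}`; likewise the sum of the `O`'s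
equals `C_{i+j+1}`. Since `E` and `O` are lower unitriangular, these are `L D Lᵀ` factorizations of
the two Hankel matrices, whose determinants are therefore `∏ w_{2l}` and `∏ w_{2l+1}`.
-/

open Finset

namespace CarlitzRiordan

open PowerSeries

variable {R : Type*} [CommRing R]

/-- The power series `F(q^k x)`, where `F = ∑ Cₙ xⁿ`. -/
noncomputable def shiftedGF (q : R) (Cat : ℕ → R) (k : ℕ) : PowerSeries R :=
  rescale (q ^ k) (PowerSeries.mk Cat)

/-- The product `F(x) F(qx) ⋯ F(q^k x)`. -/
noncomputable def prodGF (q : R) (Cat : ℕ → R) (k : ℕ) : PowerSeries R :=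
  ∏ j ∈ range (k + 1), shiftedGF q Cat j

/-- Weighted number of nonnegative paths of length `2i` from height `0` to height `2l`, as the
coefficient of `x^i` in `x^l F(x) ⋯ F(q^{2l} x)`. -/
noncomputable def evenPaths (q : R) (Cat : ℕ → R) (i l : ℕ) : R :=
  coeff i (X ^ l * prodGF q Cat (2 * l))

/-- Weighted number of nonnegative paths of length `2i+1` from height `0` to height `2l+1`, as the
coefficient of `x^i` in `x^l F(x) ⋯ F(q^{2l+1} x)`. -/
noncomputable def oddPaths (q : R) (Cat : ℕ → R) (i l : ℕ) : R :=
  coeff i (X ^ l * prodGF q Cat (2 * l + 1))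

/-- The product `q^0 q^1 ⋯ q^{k-1}` of the first `k` continued fraction coefficients. -/
def weight (q : R) (k : ℕ) : R := ∏ j ∈ range k, q ^ j

/-- The Carlitz–Riordan recurrence in terms of generating functions. -/
lemma shiftedGF_eq {q : R} {Cat : ℕ → R} (hC0 : Cat 0 = 1)
    (hC : ∀ n : ℕ, 1 ≤ n → Cat n = ∑ k ∈ range n, q ^ k * Cat k * Cat (n - k - 1)) (k : ℕ) :
    shiftedGF q Cat k
      = 1 + C (q ^ k) * X * (shiftedGF q Cat k * shiftedGF q Cat (k + 1)) := by
  have h0 : (PowerSeries.mk Cat : PowerSeries R)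
      = 1 + X * (rescale q (PowerSeries.mk Cat) * PowerSeries.mk Cat) := by
    ext n
    cases n with
    | zero => simp [hC0]
    | succ n =>
      rw [map_add, coeff_succ_X_mul, coeff_mul,
        Finset.Nat.sum_antidiagonal_eq_sum_range_succ_mk, coeff_mk, hC (n + 1) (by omega)]
      simp only [coeff_one, Nat.succ_ne_zero, if_false, zero_add, coeff_rescale, coeff_mk]
      refine Finset.sum_congr rfl fun k _ => ?_
      rw [show n + 1 - k - 1 = n - k by omega]
  have h1 := congrArg (rescale (q ^ k)) h0
  rw [map_add, map_mul, map_mul, map_one, rescale_X, rescale_rescale] at h1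
  unfold shiftedGF
  rw [pow_succ']
  linear_combination h1

lemma prodGF_succ (q : R) (Cat : ℕ → R) (k : ℕ) :
    prodGF q Cat (k + 1) = prodGF q Cat k * shiftedGF q Cat (k + 1) :=
  Finset.prod_range_succ _ _

/-- The three-term recurrence for the products, equivalent to the continued fraction of `F`. -/
lemma prodGF_step {q : R} {Cat : ℕ → R} (hC0 : Cat 0 = 1)
    (hC : ∀ n : ℕ, 1 ≤ n → Cat n = ∑ k ∈ range n, q ^ k * Cat k * Cat (n - k - 1)) (k : ℕ) :
    prodGF q Cat (k + 1)
      = prodGF q Cat k + C (q ^ (k + 1)) * X * prodGF q Cat (k + 2) := by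
  have h := shiftedGF_eq hC0 hC (k + 1)
  rw [prodGF_succ q Cat (k + 1), prodGF_succ]
  linear_combination prodGF q Cat k * h

lemma oddPaths_step {q : R} {Cat : ℕ → R} (hC0 : Cat 0 = 1)
    (hC : ∀ n : ℕ, 1 ≤ n → Cat n = ∑ k ∈ range n, q ^ k * Cat k * Cat (n - k - 1)) (i l : ℕ) :
    oddPaths q Cat i l
      = evenPaths q Cat i l + q ^ (2 * l + 1) * evenPaths q Cat i (l + 1) := by
  unfold oddPaths evenPaths
  rw [← coeff_C_mul, ← map_add, prodGF_step hC0 hC, show 2 * (l + 1) = 2 * l + 2 by ring]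
  congr 1
  ring

lemma evenPaths_step {q : R} {Cat : ℕ → R} (hC0 : Cat 0 = 1)
    (hC : ∀ n : ℕ, 1 ≤ n → Cat n = ∑ k ∈ range n, q ^ k * Cat k * Cat (n - k - 1)) (i l : ℕ) :
    evenPaths q Cat (i + 1) (l + 1)
      = oddPaths q Cat i l + q ^ (2 * l + 2) * oddPaths q Cat i (l + 1) := by
  unfold oddPaths evenPaths
  have key : X ^ (l + 1) * prodGF q Cat (2 * (l + 1))
      = X * (X ^ l * prodGF q Cat (2 * l + 1)
        + C (q ^ (2 * l + 2)) * (X ^ (l + 1) * prodGF q Cat (2 * (l + 1) + 1))) := by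
    rw [show 2 * (l + 1) = 2 * l + 1 + 1 by ring, prodGF_step hC0 hC]
    ring
  rw [key, coeff_succ_X_mul, map_add, coeff_C_mul]

lemma evenPaths_step_zero {q : R} {Cat : ℕ → R} (hC0 : Cat 0 = 1)
    (hC : ∀ n : ℕ, 1 ≤ n → Cat n = ∑ k ∈ range n, q ^ k * Cat k * Cat (n - k - 1)) (i : ℕ) :
    evenPaths q Cat (i + 1) 0 = oddPaths q Cat i 0 := by
  have h := shiftedGF_eq hC0 hC 0
  have h' : prodGF q Cat 0 = 1 + X * prodGF q Cat 1 := by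
    rw [prodGF_succ q Cat 0]
    simp only [prodGF, zero_add, Finset.prod_range_one]
    simpa using h
  unfold oddPaths evenPaths
  simp only [pow_zero, one_mul, mul_zero, zero_add]
  rw [h', map_add, coeff_succ_X_mul]
  simp [coeff_one]

lemma constantCoeff_prodGF {q : R} {Cat : ℕ → R} (hC0 : Cat 0 = 1) (k : ℕ) :
    constantCoeff (prodGF q Cat k) = 1 := by
  rw [prodGF, map_prod]
  refine Finset.prod_eq_one fun j _ => ?_
  rw [← coeff_zero_eq_constantCoeff_apply, shiftedGF, coeff_rescale]
  simp [hC0]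

lemma evenPaths_of_lt (q : R) (Cat : ℕ → R) {i l : ℕ} (h : i < l) :
    evenPaths q Cat i l = 0 := by
  simp [evenPaths, coeff_X_pow_mul', not_le.2 h]

lemma oddPaths_of_lt (q : R) (Cat : ℕ → R) {i l : ℕ} (h : i < l) :
    oddPaths q Cat i l = 0 := by
  simp [oddPaths, coeff_X_pow_mul', not_le.2 h]

lemma evenPaths_self {q : R} {Cat : ℕ → R} (hC0 : Cat 0 = 1) (i : ℕ) :
    evenPaths q Cat i i = 1 := by
  simp [evenPaths, coeff_X_pow_mul', constantCoeff_prodGF hC0]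

lemma oddPaths_self {q : R} {Cat : ℕ → R} (hC0 : Cat 0 = 1) (i : ℕ) :
    oddPaths q Cat i i = 1 := by
  simp [oddPaths, coeff_X_pow_mul', constantCoeff_prodGF hC0]

lemma evenPaths_zero_right (q : R) (Cat : ℕ → R) (i : ℕ) : evenPaths q Cat i 0 = Cat i := by
  simp [evenPaths, prodGF, shiftedGF]

/-- Summation by parts, with its boundary term. -/
lemma sum_even_add_boundary {q : R} {Cat : ℕ → R} (hC0 : Cat 0 = 1)
    (hC : ∀ n : ℕ, 1 ≤ n → Cat n = ∑ k ∈ range n, q ^ k * Cat k * Cat (n - k - 1)) (i j N : ℕ) :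
    ∑ l ∈ range (N + 1), evenPaths q Cat (i + 1) l * weight q (2 * l) * evenPaths q Cat j l
        + oddPaths q Cat i N * weight q (2 * N + 2) * evenPaths q Cat j (N + 1)
      = ∑ l ∈ range (N + 1),
          oddPaths q Cat i l * weight q (2 * l + 1) * oddPaths q Cat j l := by
  induction N with
  | zero =>
    simp only [zero_add, Finset.sum_range_one, evenPaths_step_zero hC0 hC,
      oddPaths_step hC0 hC j, weight, mul_zero, Finset.prod_range_succ, Finset.prod_range_zero]
    ring
  | succ N ih =>
    rw [Finset.sum_range_succ, Finset.sum_range_succ _ (N + 1), ← ih, evenPaths_step hC0 hC,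
      oddPaths_step hC0 hC j (N + 1), show 2 * (N + 1) = 2 * N + 2 by ring]
    have h1 : weight q (2 * N + 2 + 1) = weight q (2 * N + 2) * q ^ (2 * N + 2) :=
      Finset.prod_range_succ _ _
    have h2 : weight q (2 * N + 2 + 2) = weight q (2 * N + 2 + 1) * q ^ (2 * N + 2 + 1) :=
      Finset.prod_range_succ _ _
    rw [h2, h1]
    ring

lemma sum_even_eq_sum_odd {q : R} {Cat : ℕ → R} (hC0 : Cat 0 = 1)
    (hC : ∀ n : ℕ, 1 ≤ n → Cat n = ∑ k ∈ range n, q ^ k * Cat k * Cat (n - k - 1))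
    (i : ℕ) {j N : ℕ} (hj : j ≤ N) :
    ∑ l ∈ range (N + 1), evenPaths q Cat (i + 1) l * weight q (2 * l) * evenPaths q Cat j l
      = ∑ l ∈ range (N + 1),
          oddPaths q Cat i l * weight q (2 * l + 1) * oddPaths q Cat j l := by
  rw [← sum_even_add_boundary hC0 hC, evenPaths_of_lt q Cat (Nat.lt_succ_of_le hj), mul_zero,
    add_zero]

/-- The factorization of `C_{i+j}`, with summation range large enough to move all of `j` over
to `i` one unit at a time. -/
lemma sum_even_of_add_le {q : R} {Cat : ℕ → R} (hC0 : Cat 0 = 1)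
    (hC : ∀ n : ℕ, 1 ≤ n → Cat n = ∑ k ∈ range n, q ^ k * Cat k * Cat (n - k - 1))
    (N j i : ℕ) (h : i + j ≤ N) :
    ∑ l ∈ range (N + 1), evenPaths q Cat i l * weight q (2 * l) * evenPaths q Cat j l
      = Cat (i + j) := by
  induction j generalizing i with
  | zero =>
    rw [Finset.sum_eq_single 0]
    · simp [evenPaths_zero_right, hC0, weight]
    · intro l _ hl
      rw [evenPaths_of_lt q Cat (Nat.pos_of_ne_zero hl), mul_zero]
    · simp
  | succ j ih =>
    have key := ih (i + 1) (by omega)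
    rw [sum_even_eq_sum_odd hC0 hC i (by omega : j ≤ N)] at key
    have key' := sum_even_eq_sum_odd hC0 hC j (by omega : i ≤ N)
    rw [show i + (j + 1) = i + 1 + j by ring, ← key]
    trans ∑ l ∈ range (N + 1), oddPaths q Cat j l * weight q (2 * l + 1) * oddPaths q Cat i l
    · rw [← key']
      exact Finset.sum_congr rfl fun l _ => by ring
    · exact Finset.sum_congr rfl fun l _ => by ring

lemma sum_even {q : R} {Cat : ℕ → R} (hC0 : Cat 0 = 1)
    (hC : ∀ n : ℕ, 1 ≤ n → Cat n = ∑ k ∈ range n, q ^ k * Cat k * Cat (n - k - 1))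
    (i : ℕ) {j N : ℕ} (hj : j ≤ N) :
    ∑ l ∈ range (N + 1), evenPaths q Cat i l * weight q (2 * l) * evenPaths q Cat j l
      = Cat (i + j) := by
  rw [← sum_even_of_add_le hC0 hC (N + i) j i (by omega)]
  refine Finset.sum_subset (Finset.range_mono (by omega)) fun l _ hl => ?_
  rw [Finset.mem_range] at hl
  rw [evenPaths_of_lt q Cat (by omega : j < l), mul_zero]

/-- A matrix of the form `L D Lᵀ` with `L` lower unitriangular and `D` diagonal has determinant
`det D`. -/
lemma det_of_factorization (n : ℕ) (L : ℕ → ℕ → R) (d : ℕ → R) (H : ℕ → ℕ → R)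
    (hL : ∀ i l, i < l → L i l = 0) (hL1 : ∀ i, L i i = 1)
    (hH : ∀ i j, j ≤ n → ∑ l ∈ range (n + 1), L i l * d l * L j l = H i j) :
    Matrix.det (Matrix.of fun i j : Fin (n + 1) => H i.val j.val)
      = ∏ l ∈ range (n + 1), d l := by
  let A : Matrix (Fin (n + 1)) (Fin (n + 1)) R := Matrix.of fun i l => L i.val l.val
  have hA : A.det = 1 := by
    rw [Matrix.det_of_isLowerTriangular A]
    · exact Finset.prod_eq_one fun i _ => hL1 _
    · intro i j hij
      exact hL _ _ hij
  have hM : (Matrix.of fun i j : Fin (n + 1) => H i.val j.val)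
      = A * Matrix.diagonal (fun l : Fin (n + 1) => d l.val) * A.transpose := by
    ext i j
    rw [Matrix.mul_apply, Matrix.of_apply, ← hH i j (by omega), ← Fin.sum_univ_eq_sum_range
      (fun l => L i l * d l * L j l)]
    simp [A, Matrix.mul_diagonal]
  rw [hM, Matrix.det_mul, Matrix.det_mul, Matrix.det_transpose, hA, Matrix.det_diagonal,
    one_mul, mul_one, Fin.prod_univ_eq_prod_range]

lemma weight_even (q : R) (l : ℕ) : weight q (2 * l) = q ^ (l * (2 * l - 1)) := by
  rw [weight, Finset.prod_pow_eq_pow_sum, Finset.sum_range_id, mul_assoc,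
    Nat.mul_div_cancel_left _ two_pos]

lemma weight_odd (q : R) (l : ℕ) : weight q (2 * l + 1) = q ^ (l * (2 * l + 1)) := by
  rw [weight, Finset.prod_pow_eq_pow_sum, Finset.sum_range_id, Nat.add_sub_cancel,
    show (2 * l + 1) * (2 * l) = 2 * (l * (2 * l + 1)) by ring,
    Nat.mul_div_cancel_left _ two_pos]

lemma prod_weight_even (q : R) (n : ℕ) :
    ∏ l ∈ range (n + 1), weight q (2 * l) = q ^ (n * (n + 1) * (4 * n - 1) / 6) := by
  have h : ∀ n, n * (n + 1) * (4 * n - 1) = 6 * ∑ l ∈ range (n + 1), l * (2 * l - 1) := by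
    intro n
    induction n with
    | zero => simp
    | succ n ih =>
      rw [Finset.sum_range_succ, Nat.mul_add 6, ← ih]
      cases n with
      | zero => simp
      | succ m =>
        rw [show 4 * (m + 1 + 1) - 1 = 4 * m + 7 by omega,
          show 4 * (m + 1) - 1 = 4 * m + 3 by omega,
          show 2 * (m + 1 + 1) - 1 = 2 * m + 3 by omega]
        ring
  rw [h, Nat.mul_div_cancel_left _ (by norm_num), ← Finset.prod_pow_eq_pow_sum]
  exact Finset.prod_congr rfl fun l _ => weight_even q l

lemma prod_weight_odd (q : R) (n : ℕ) :
    ∏ l ∈ range (n + 1), weight q (2 * l + 1) = q ^ (n * (n + 1) * (4 * n + 5) / 6) := by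
  have h : ∀ n, n * (n + 1) * (4 * n + 5) = 6 * ∑ l ∈ range (n + 1), l * (2 * l + 1) := by
    intro n
    induction n with
    | zero => simp
    | succ n ih =>
      rw [Finset.sum_range_succ, Nat.mul_add 6, ← ih]
      ring
  rw [h, Nat.mul_div_cancel_left _ (by norm_num), ← Finset.prod_pow_eq_pow_sum]
  exact Finset.prod_congr rfl fun l _ => weight_odd q l

end CarlitzRiordan

open CarlitzRiordan

/-- Hankel determinants of the Carlitz–Riordan q-Catalan numbers:
`det(C_{i+j})_{i,j=0}^n = q^{n(n+1)(4n−1)/6}` and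
`det(C_{i+j+1})_{i,j=0}^n = q^{n(n+1)(4n+5)/6}`. -/
theorem stmt_10 {R : Type*} [CommRing R] (q : R) (Cat : ℕ → R)
    (hC0 : Cat 0 = 1)
    (hC : ∀ n : ℕ, 1 ≤ n →
      Cat n = ∑ k ∈ range n, q ^ k * Cat k * Cat (n - k - 1)) :
    ∀ n : ℕ,
      Matrix.det (Matrix.of fun i j : Fin (n + 1) => Cat (i.val + j.val))
        = q ^ (n * (n + 1) * (4 * n - 1) / 6) ∧
      Matrix.det (Matrix.of fun i j : Fin (n + 1) => Cat (i.val + j.val + 1))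
        = q ^ (n * (n + 1) * (4 * n + 5) / 6) := by
  intro n
  constructor
  · rw [← prod_weight_even]
    exact det_of_factorization n (evenPaths q Cat) _ (fun i j => Cat (i + j))
      (fun i l h => evenPaths_of_lt q Cat h) (evenPaths_self hC0)
      (fun i j hj => sum_even hC0 hC i hj)
  · rw [← prod_weight_odd]
    refine det_of_factorization n (oddPaths q Cat) _ (fun i j => Cat (i + j + 1))
      (fun i l h => oddPaths_of_lt q Cat h) (oddPaths_self hC0) (fun i j hj => ?_)
    rw [← sum_even_eq_sum_odd hC0 hC i hj, sum_even hC0 hC (i + 1) hj]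
    congr 1
    ring
end

section
/- For every n ≥ 0, the Hankel determinant of the q-analogues C*_n(a,b,q) satisfies det(C*_{i+j}(a,b,q))_{i,j=0}^{n} = (ab)^{n(n+1)/2} · q^{n(n+1)(n−1)/3} (the exponent n(n+1)(n−1)/3 is an integer). -/
/-!
The generating function `f = ∑ C*_n xⁿ` satisfies `f(x) = 1 + a x f(x) + b x f(qx) (f(x) - 1)`.
Put `g(x) = f(qx) / (1 - b x f(qx))`. The functional equation then reads
`f(x) (1 - a x - a b x² g(x)) = 1` and `g(x) (1 - (a q + b) x - a b q² x² g(qx)) = 1`, the first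
steps of a Jacobi continued fraction, the second of which is self-similar.

If `u (1 - s x - l x² v) = 1`, the Hankel matrix of `u` factors as `T · diag(1, l V) · Tᵀ`, with `V`
the Hankel matrix of `v` and `T` the lower unitriangular Toeplitz matrix of `u`; hence the Hankel
determinant of order `n + 2` of `u` is `l ^ (n + 1)` times that of order `n + 1` of `v`
(`hankelDet_succ`). Replacing `v(x)` by `v(qx)` multiplies the latter by `q ^ (n (n + 1))`
(`hankelDet_rescale`). This gives the determinants of `g` by induction, and then those of `f`.
The argument divides only by power series with constant coefficient `1`, so it is valid over every
commutative ring.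
-/

open Finset

namespace QHankel

variable {R : Type*} [CommRing R]

/-- The Hankel determinant `det (u_{i+j})` of size `n + 1`, with indices `0 ≤ i, j ≤ n`. -/
def hankelDet (u : ℕ → R) (n : ℕ) : R :=
  Matrix.det (Matrix.of fun i j : Fin (n + 1) => u (i.val + j.val))

/-- Entrywise form of the factorization `T · diag(1, l V) · Tᵀ` of the Hankel matrix of `u`. The
right-hand side depends only on `i + j`: passing from `(i + 1, j)` to `(i, j + 1)`, the
terms with `k = 0` or `m = 0` cancel the change in `u i * u j` by the recurrence for `u`. -/
lemma hankel_entry (u v : ℕ → R) (s l : R) (h0 : u 0 = 1)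
    (h : ∀ n, u (n + 1) = s * u n + l * ∑ k ∈ range n, u (n - 1 - k) * v k) (i j : ℕ) :
    u (i + j) = u i * u j
      + l * ∑ k ∈ range i, ∑ m ∈ range j, u (i - 1 - k) * u (j - 1 - m) * v (k + m) := by
  induction i generalizing j with
  | zero => simp [h0]
  | succ i ih =>
    have e : i + 1 + j = i + (j + 1) := by ring
    rw [e, ih (j + 1), h i, h j]
    simp only [Finset.sum_range_succ']
    have e1 : ∀ n k, n + 1 - 1 - (k + 1) = n - 1 - k := by intros; omega
    have e2 : ∀ n, n + 1 - 1 - 0 = n := by intros; omega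
    simp only [e1, e2, Finset.sum_add_distrib, zero_add, add_zero]
    have e3 : ∀ k m : ℕ, k + 1 + m = k + (m + 1) := by intros; ring
    have e4 : ∑ k ∈ range i, u (i - 1 - k) * u j * v k
        = u j * ∑ k ∈ range i, u (i - 1 - k) * v k := by
      rw [Finset.mul_sum]; exact Finset.sum_congr rfl fun _ _ => by ring
    have e5 : ∑ k ∈ range j, u i * u (j - 1 - k) * v k
        = u i * ∑ k ∈ range j, u (j - 1 - k) * v k := by
      rw [Finset.mul_sum]; exact Finset.sum_congr rfl fun _ _ => by ring
    simp only [e3, e4, e5]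
    ring

/-- The entry `u_{i-k}` of the lower triangular Toeplitz matrix of `u`, zero above the diagonal. -/
def toep (u : ℕ → R) (i k : ℕ) : R := if k ≤ i then u (i - k) else 0

lemma sum_toep (u F : ℕ → R) {i N : ℕ} (hi : i ≤ N) :
    ∑ k : Fin N, toep u i (k.val + 1) * F k.val = ∑ k ∈ range i, u (i - 1 - k) * F k := by
  rw [Fin.sum_univ_eq_sum_range (fun k => toep u i (k + 1) * F k) N]
  symm
  rw [← Finset.sum_subset (Finset.range_mono hi)]
  · refine Finset.sum_congr rfl fun k hk => ?_
    have hk := Finset.mem_range.1 hk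
    have e : i - (k + 1) = i - 1 - k := by omega
    rw [toep, if_pos (by omega), e]
  · intro k _ hk
    have hk := mt Finset.mem_range.2 hk
    rw [toep, if_neg (by omega), zero_mul]

/-- Peeling off one level of a Jacobi continued fraction: the recurrence says that the generating
functions satisfy `u (1 - s x - l x² v) = 1`. -/
lemma hankelDet_succ_of_rec (u v : ℕ → R) (s l : R) (h0 : u 0 = 1)
    (h : ∀ n, u (n + 1) = s * u n + l * ∑ k ∈ range n, u (n - 1 - k) * v k) (n : ℕ) :
    hankelDet u (n + 1) = l ^ (n + 1) * hankelDet v n := by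
  let T : Matrix (Fin (n + 2)) (Fin (n + 2)) R := Matrix.of fun i k => toep u i.val k.val
  let V : Matrix (Fin (n + 1)) (Fin (n + 1)) R := Matrix.of fun i j => v (i.val + j.val)
  -- The block matrix `diag(1, l V)`.
  let M : Matrix (Fin (n + 2)) (Fin (n + 2)) R := Matrix.of fun i j =>
    Fin.cases (Fin.cases 1 (fun _ => 0) j) (fun i' => Fin.cases 0 (fun j' => (l • V) i' j') j) i
  have hT : T.det = 1 := by
    rw [Matrix.det_of_isLowerTriangular]
    · simp [T, toep, h0]
    · intro i j hij
      have : i.val < j.val := hij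
      simp only [T, Matrix.of_apply, toep]
      rw [if_neg (by omega)]
  have hM : M.det = l ^ (n + 1) * V.det := by
    rw [Matrix.det_succ_column_zero, Fin.sum_univ_succ]
    have hs : M.submatrix (Fin.succAbove 0) Fin.succ = l • V := by
      ext i j; simp [M]
    rw [hs, Matrix.det_smul]
    simp [M]
  have hU : (Matrix.of fun i j : Fin (n + 1 + 1) => u (i.val + j.val)) = T * M * T.transpose := by
    ext i j
    have hi : i.val ≤ n + 1 := by omega
    have hj : j.val ≤ n + 1 := by omega
    rw [Matrix.of_apply, hankel_entry u v s l h0 h, Matrix.mul_assoc]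
    simp only [Matrix.mul_apply, Fin.sum_univ_succ (n := n + 1), Matrix.transpose_apply]
    simp only [T, M, V, Matrix.of_apply, Fin.cases_zero, Fin.cases_succ, Fin.val_zero,
      Fin.val_succ, Matrix.smul_apply, smul_eq_mul, zero_mul, Finset.sum_const_zero, add_zero,
      zero_add, one_mul]
    have t0 : ∀ i, toep u i 0 = u i := by simp [toep]
    rw [t0, t0]
    congr 1
    have inner : ∀ k : ℕ, ∑ m : Fin (n + 1), l * v (k + m.val) * toep u j.val (m.val + 1)
        = l * ∑ m ∈ range j.val, u (j.val - 1 - m) * v (k + m) := by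
      intro k
      rw [← sum_toep u (fun m => v (k + m)) hj, Finset.mul_sum]
      exact Finset.sum_congr rfl fun _ _ => by ring
    simp only [inner]
    rw [sum_toep u (fun k => l * ∑ m ∈ range j.val, u (j.val - 1 - m) * v (k + m)) hi,
      Finset.mul_sum]
    refine Finset.sum_congr rfl fun k _ => ?_
    simp only [Finset.mul_sum]
    exact Finset.sum_congr rfl fun _ _ => by ring
  rw [hankelDet, hU, Matrix.det_mul, Matrix.det_mul, Matrix.det_transpose, hT, hM]
  simp [hankelDet, V]

open PowerSeries in
lemma hankelDet_succ (f g : PowerSeries R) (s l : R)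
    (h : f * (1 - C s * X - C l * X ^ 2 * g) = 1) (n : ℕ) :
    hankelDet (fun k => coeff k f) (n + 1) = l ^ (n + 1) * hankelDet (fun k => coeff k g) n := by
  have hf : f = 1 + X * (C s * f + C l * (X * (g * f))) := by linear_combination h
  refine hankelDet_succ_of_rec _ _ s l ?_ ?_ n
  · have := congrArg (coeff 0) hf
    simpa using this
  · intro n
    have := congrArg (coeff (n + 1)) hf
    rw [map_add, coeff_succ_X_mul, map_add, coeff_C_mul, coeff_C_mul] at this
    rw [this]
    have h1 : coeff (n + 1) (1 : PowerSeries R) = 0 := by simp [coeff_one]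
    rw [h1, zero_add]
    congr 2
    cases n with
    | zero => simp
    | succ n =>
      rw [coeff_succ_X_mul, coeff_mul, Finset.Nat.sum_antidiagonal_eq_sum_range_succ_mk]
      exact Finset.sum_congr rfl fun k _ => by rw [Nat.add_sub_cancel, mul_comm]

lemma hankelDet_rescale (u : ℕ → R) (q : R) (n : ℕ) :
    hankelDet (fun k => q ^ k * u k) n = q ^ (n * (n + 1)) * hankelDet u n := by
  have hp : ∏ i : Fin (n + 1), q ^ i.val = q ^ (∑ i ∈ range (n + 1), i) := by
    rw [Fin.prod_univ_eq_prod_range (fun i => q ^ i), Finset.prod_pow_eq_pow_sum]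
  have hs := Finset.sum_range_id_mul_two (n + 1)
  have he : n * (n + 1) = (∑ i ∈ range (n + 1), i) + ∑ i ∈ range (n + 1), i := by
    rw [← mul_two, hs, Nat.add_sub_cancel, mul_comm]
  have hm : (Matrix.of fun i j : Fin (n + 1) => q ^ (i.val + j.val) * u (i.val + j.val))
      = Matrix.of fun i j : Fin (n + 1) => q ^ i.val *
        (Matrix.of fun i j : Fin (n + 1) => q ^ j.val *
          (Matrix.of fun i j : Fin (n + 1) => u (i.val + j.val)) i j) i j := by
    ext i j
    simp only [Matrix.of_apply]
    ring
  rw [hankelDet, hm, Matrix.det_mul_column, Matrix.det_mul_row, hp, he, pow_add, hankelDet,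
    mul_assoc]

open PowerSeries in
/-- The Hankel determinants of a series with a self-similar Jacobi continued fraction. -/
lemma hankelDet_selfSimilar (g : PowerSeries R) (s c q : R)
    (h : g * (1 - C s * X - C (c * q ^ 2) * X ^ 2 * rescale q g) = 1) (n : ℕ) :
    hankelDet (fun k => coeff k g) n
      = c ^ (n * (n + 1) / 2) * q ^ (n * (n + 1) * (n + 2) / 3) := by
  induction n with
  | zero =>
    have := congrArg (coeff 0) h
    simpa [hankelDet] using this
  | succ n ih =>
    rw [hankelDet_succ g _ _ _ h]
    simp only [coeff_rescale]
    rw [hankelDet_rescale, ih]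
    have e1 : (n + 1) * (n + 1 + 1) / 2 = (n + 1) + n * (n + 1) / 2 := by
      have : (n + 1) * (n + 1 + 1) = n * (n + 1) + (n + 1) * 2 := by ring
      rw [this, Nat.add_mul_div_right _ _ (by norm_num), add_comm]
    have e2 : (n + 1) * (n + 1 + 1) * (n + 1 + 2) / 3
        = 2 * (n + 1) + n * (n + 1) + n * (n + 1) * (n + 2) / 3 := by
      have : (n + 1) * (n + 1 + 1) * (n + 1 + 2)
          = n * (n + 1) * (n + 2) + (2 * (n + 1) + n * (n + 1)) * 3 := by ring
      rw [this, Nat.add_mul_div_right _ _ (by norm_num), add_comm]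
    rw [e1, e2, mul_pow, ← pow_mul]
    simp only [pow_add]
    ring

end QHankel

open QHankel in
/-- Hankel determinant:
`det(C*_{i+j})_{i,j=0}^n = (ab)^{n(n+1)/2} · q^{n(n+1)(n−1)/3}`. -/
theorem stmt_15 {R : Type*} [CommRing R] (a b q : R) (Cs : ℕ → R)
    (hC0 : Cs 0 = 1)
    (hC : ∀ n : ℕ, 1 ≤ n →
      Cs n = a * Cs (n - 1)
        + b * ∑ k ∈ range (n - 1), q ^ k * Cs k * Cs (n - 1 - k)) :
    ∀ n : ℕ,
      Matrix.det (Matrix.of fun i j : Fin (n + 1) => Cs (i.val + j.val))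
        = (a * b) ^ (n * (n + 1) / 2) * q ^ (n * (n + 1) * (n - 1) / 3) := by
  intro n
  cases n with
  | zero => simp [hC0]
  | succ n =>
    let f : PowerSeries R := PowerSeries.mk Cs
    let F : PowerSeries R := PowerSeries.rescale q f
    let X : PowerSeries R := PowerSeries.X
    let A : PowerSeries R := PowerSeries.C a
    let B : PowerSeries R := PowerSeries.C b
    let Q : PowerSeries R := PowerSeries.C q
    -- The last term of the convolution drops out since `f - 1` has no constant term.
    have hf : f = 1 + X * (A * f + B * (F * (f - 1))) := by
      ext m
      cases m with
      | zero => simp [f, X, hC0]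
      | succ m =>
        have h1 : PowerSeries.coeff (m + 1) (1 : PowerSeries R) = 0 := by
          simp [PowerSeries.coeff_one]
        rw [map_add, PowerSeries.coeff_succ_X_mul, map_add, PowerSeries.coeff_C_mul,
          PowerSeries.coeff_C_mul, h1, zero_add, PowerSeries.coeff_mul,
          Finset.Nat.sum_antidiagonal_eq_sum_range_succ_mk, Finset.sum_range_succ]
        simp only [f, F, PowerSeries.coeff_mk, PowerSeries.coeff_rescale, map_sub,
          PowerSeries.coeff_one, Nat.sub_self, if_true, hC0, sub_self, mul_zero, add_zero]
        rw [hC (m + 1) (by omega), Nat.add_sub_cancel]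
        congr 2
        refine Finset.sum_congr rfl fun k hk => ?_
        have hk := Finset.mem_range.1 hk
        rw [if_neg (by omega), sub_zero]
    -- `F * G` is the series `g(x) = f(qx) / (1 - b x f(qx))`.
    obtain ⟨G, hG⟩ : ∃ G : PowerSeries R, (1 - B * X * F) * G = 1 :=
      ⟨PowerSeries.invOfUnit (1 - B * X * F) 1,
        PowerSeries.mul_invOfUnit _ _ (by simp [X])⟩
    have hfg : f * (1 - PowerSeries.C a * PowerSeries.X
        - PowerSeries.C (a * b) * PowerSeries.X ^ 2 * (F * G)) = 1 := by
      rw [map_mul]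
      change f * (1 - A * X - A * B * X ^ 2 * (F * G)) = 1
      linear_combination G * hf + (1 + A * X * f - f) * hG
    -- Substitute `q x` for `x` in `hfg`.
    have hF : F * (1 - A * Q * X
        - A * B * Q ^ 2 * X ^ 2 * PowerSeries.rescale q (F * G)) = 1 := by
      have rC : ∀ c : R, PowerSeries.rescale q (PowerSeries.C c) = PowerSeries.C c := by
        intro c
        ext m
        by_cases hm : m = 0 <;> simp [PowerSeries.coeff_rescale, PowerSeries.coeff_C, hm]
      have rX : PowerSeries.rescale q (PowerSeries.X : PowerSeries R) = Q * X :=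
        PowerSeries.rescale_X q
      have h := congrArg (PowerSeries.rescale q) hfg
      rw [map_mul, map_sub, map_sub, map_mul, map_mul (PowerSeries.rescale q) _ (F * G),
        map_mul (PowerSeries.rescale q) _ (PowerSeries.X ^ 2), map_pow, map_one, rC, rC, rX,
        map_mul PowerSeries.C] at h
      linear_combination h
    have hg : (F * G) * (1 - PowerSeries.C (a * q + b) * PowerSeries.X
        - PowerSeries.C (a * b * q ^ 2) * PowerSeries.X ^ 2
          * PowerSeries.rescale q (F * G)) = 1 := by
      simp only [map_add, map_mul PowerSeries.C, map_pow]
      change (F * G) * (1 - (A * Q + B) * X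
        - A * B * Q ^ 2 * X ^ 2 * PowerSeries.rescale q (F * G)) = 1
      linear_combination G * hF + hG
    have key := hankelDet_succ f (F * G) _ _ hfg n
    rw [hankelDet_selfSimilar (F * G) _ (a * b) q hg n] at key
    simp only [f, PowerSeries.coeff_mk] at key
    have e1 : (n + 1) * (n + 1 + 1) / 2 = (n + 1) + n * (n + 1) / 2 := by
      have : (n + 1) * (n + 1 + 1) = n * (n + 1) + (n + 1) * 2 := by ring
      rw [this, Nat.add_mul_div_right _ _ (by norm_num), add_comm]
    have e2 : (n + 1) * (n + 1 + 1) * (n + 1 - 1) = n * (n + 1) * (n + 2) := by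
      rw [Nat.add_sub_cancel]; ring
    rw [e1, e2, pow_add, mul_assoc]
    exact key
end

section
/- For every n ≥ 0, the Carlitz–Riordan q-Catalan number equals the Pólya–Gessel q-Catalan number with parameters a = 1, b = q and base q²: C_n(q) = C*_n(1, q, q²). -/
/-!
Let `c(x) = ∑ C_n(q) x ^ n`. The Carlitz–Riordan recurrence says `c(x) = 1 + x c(qx) c(x)`.
Substituting `qx` for `x` gives `c(qx) = 1 + q x c(q²x) c(qx)`, and hence
`c(x) - 1 = x c(x) + q x c(q²x) (x c(qx) c(x)) = x c(x) + q x c(q²x) (c(x) - 1)`.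
Comparing coefficients, `C_n(q)` satisfies the recurrence that determines `C*_n(1, q, q²)`.
-/

open Finset

/-- The functional equation `c(x) = 1 + x c(qx) c(x)`. -/
lemma carlitzRiordan_genFun {R : Type*} [CommRing R] (q : R) (Cat : ℕ → R)
    (hC0 : Cat 0 = 1)
    (hC : ∀ n : ℕ, 1 ≤ n →
      Cat n = ∑ k ∈ range n, q ^ k * Cat k * Cat (n - k - 1)) :
    PowerSeries.mk Cat = 1 + PowerSeries.X *
      (PowerSeries.rescale q (PowerSeries.mk Cat) * PowerSeries.mk Cat) := by
  ext n
  cases n with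
  | zero => simp [hC0]
  | succ n =>
    rw [map_add, PowerSeries.coeff_succ_X_mul, PowerSeries.coeff_mul,
      Finset.Nat.sum_antidiagonal_eq_sum_range_succ_mk, PowerSeries.coeff_mk,
      hC (n + 1) (by omega)]
    simp only [PowerSeries.coeff_rescale, PowerSeries.coeff_mk, PowerSeries.coeff_one]
    rw [if_neg (by omega), zero_add]
    refine Finset.sum_congr rfl fun k _ => ?_
    rw [show n + 1 - k - 1 = n - k by omega]

/-- The Carlitz–Riordan numbers satisfy the Pólya–Gessel recurrence with `a = 1`, `b = q` and
base `q²`. -/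
lemma carlitzRiordan_polyaGessel_rec {R : Type*} [CommRing R] (q : R) (Cat : ℕ → R)
    (hC0 : Cat 0 = 1)
    (hC : ∀ n : ℕ, 1 ≤ n →
      Cat n = ∑ k ∈ range n, q ^ k * Cat k * Cat (n - k - 1)) (n : ℕ) :
    Cat (n + 1) = Cat n + q * ∑ k ∈ range n, (q ^ 2) ^ k * Cat k * Cat (n - k) := by
  have h1 := carlitzRiordan_genFun q Cat hC0 hC
  set c := PowerSeries.mk Cat with hc
  have h2 : PowerSeries.rescale q c = 1 + PowerSeries.C q * PowerSeries.X *
      (PowerSeries.rescale (q ^ 2) c * PowerSeries.rescale q c) := by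
    have h := congrArg (PowerSeries.rescale q) h1
    rw [map_add, map_mul, map_mul, map_one, PowerSeries.rescale_X,
      PowerSeries.rescale_rescale, ← pow_two] at h
    exact h
  have h3 : c = 1 + PowerSeries.X *
      (c + PowerSeries.C q * (PowerSeries.rescale (q ^ 2) c * (c - 1))) := by
    linear_combination (1 - PowerSeries.X * PowerSeries.C q * PowerSeries.rescale (q ^ 2) c) * h1
      + PowerSeries.X * c * h2
  have h4 := congrArg (PowerSeries.coeff (n + 1)) h3
  rw [map_add, PowerSeries.coeff_succ_X_mul, map_add, PowerSeries.coeff_C_mul,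
    PowerSeries.coeff_mul, Finset.Nat.sum_antidiagonal_eq_sum_range_succ_mk,
    Finset.sum_range_succ] at h4
  simp only [hc, PowerSeries.coeff_rescale, PowerSeries.coeff_mk, PowerSeries.coeff_one, map_sub,
    Nat.sub_self, hC0, if_true, sub_self, mul_zero, add_zero, Nat.succ_ne_zero, if_false,
    zero_add] at h4
  rw [h4]
  congr 2
  refine Finset.sum_congr rfl fun k hk => ?_
  have hk' : n - k ≠ 0 := by have := Finset.mem_range.mp hk; omega
  rw [if_neg hk', sub_zero]

/-- `C_n(q) = C*_n(1, q, q²)`: the Carlitz–Riordan q-Catalan numbers are the Pólya–Gessel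
q-Catalan numbers with parameters `a = 1`, `b = q` and base `q²`. -/
theorem stmt_17 {R : Type*} [CommRing R] (q : R) (Cat : ℕ → R)
    (hC0 : Cat 0 = 1)
    (hC : ∀ n : ℕ, 1 ≤ n →
      Cat n = ∑ k ∈ range n, q ^ k * Cat k * Cat (n - k - 1))
    (Cs : R → R → R → ℕ → R)
    (hCs0 : ∀ a b Q : R, Cs a b Q 0 = 1)
    (hCs : ∀ a b Q : R, ∀ n : ℕ, 1 ≤ n →
      Cs a b Q n = a * Cs a b Q (n - 1)
        + b * ∑ k ∈ range (n - 1), Q ^ k * Cs a b Q k * Cs a b Q (n - 1 - k)) :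
    ∀ n : ℕ, Cat n = Cs 1 q (q ^ 2) n := by
  intro n
  induction n using Nat.strong_induction_on with
  | _ n ih =>
    cases n with
    | zero => rw [hC0, hCs0]
    | succ n =>
      rw [carlitzRiordan_polyaGessel_rec q Cat hC0 hC n, hCs 1 q (q ^ 2) (n + 1) (by omega),
        Nat.add_sub_cancel, one_mul, ih n (by omega)]
      congr 2
      refine Finset.sum_congr rfl fun k hk => ?_
      have hk' := Finset.mem_range.mp hk
      rw [ih k (by omega), ih (n - k) (by omega)]
end

section
/- For every n ≥ 0, C*_{2n+1}(1, −1, q) = (−1)^n q^n C_n(q²) and C*_{2n+2}(1, −1, q) = 0, where C_n denotes the Carlitz–Riordan q-Catalan numbers evaluated at q². -/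
/-!
Write `c m` for `C*_m(1, -1, q)`. In the recursion for `c (m + 2)` the `k = 0` term cancels `c (m + 1)`,
so that `c (m + 2) = -∑_{k < m} q^(k+1) c (k+1) c (m-k)`, in which all indices of `c` are positive.
By strong induction `c` vanishes at the positive even indices below the current one. If `m` is even,
the two indices `k + 1` and `m - k` have odd sum, so every term vanishes. If `m = 2n + 1`, only the
terms with `k = 2j` survive, and they form the Carlitz–Riordan recursion for `C_{n+1}(q²)`, each
multiplied by `(-1)^(n+1) q^(n+1)`.
-/

open Finset

lemma sum_range_two_mul_add_one {M : Type*} [AddCommMonoid M] (f : ℕ → M) (n : ℕ) :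
    ∑ k ∈ range (2 * n + 1), f k
      = ∑ j ∈ range (n + 1), f (2 * j) + ∑ j ∈ range n, f (2 * j + 1) := by
  induction n with
  | zero => simp
  | succ n ih =>
    rw [show 2 * (n + 1) + 1 = 2 * n + 1 + 1 + 1 by ring, sum_range_succ, sum_range_succ, ih,
      sum_range_succ _ (n + 1), sum_range_succ _ n, sum_range_succ _ n,
      show 2 * (n + 1) = 2 * n + 1 + 1 by ring]
    abel

/-- `C*_{2n+1}(1, −1, q) = (−1)^n q^n C_n(q²)` and `C*_{2n+2}(1, −1, q) = 0`, where
`C_n` are the Carlitz–Riordan q-Catalan numbers evaluated at `q²`. -/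
theorem stmt_18 {R : Type*} [CommRing R] (q : R) (Cat : R → ℕ → R)
    (hC0 : ∀ p : R, Cat p 0 = 1)
    (hC : ∀ p : R, ∀ n : ℕ, 1 ≤ n →
      Cat p n = ∑ k ∈ range n, p ^ k * Cat p k * Cat p (n - k - 1))
    (Cs : R → R → R → ℕ → R)
    (hCs0 : ∀ a b Q : R, Cs a b Q 0 = 1)
    (hCs : ∀ a b Q : R, ∀ n : ℕ, 1 ≤ n →
      Cs a b Q n = a * Cs a b Q (n - 1)
        + b * ∑ k ∈ range (n - 1), Q ^ k * Cs a b Q k * Cs a b Q (n - 1 - k)) :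
    ∀ n : ℕ,
      Cs 1 (-1) q (2 * n + 1) = (-1) ^ n * q ^ n * Cat (q ^ 2) n ∧
      Cs 1 (-1) q (2 * n + 2) = 0 := by
  have h1 : Cs 1 (-1) q 1 = 1 := by
    rw [hCs _ _ _ 1 le_rfl]
    simp [hCs0]
  have hrec : ∀ m : ℕ, Cs 1 (-1) q (m + 2)
      = -∑ k ∈ range m, q ^ (k + 1) * Cs 1 (-1) q (k + 1) * Cs 1 (-1) q (m - k) := by
    intro m
    rw [hCs _ _ _ (m + 2) (by omega), show m + 2 - 1 = m + 1 by omega, sum_range_succ']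
    simp only [Nat.add_sub_add_right, hCs0, Nat.sub_zero]
    ring
  intro n
  induction n using Nat.strong_induction_on with
  | _ n ih =>
    have hodd : Cs 1 (-1) q (2 * n + 1) = (-1) ^ n * q ^ n * Cat (q ^ 2) n := by
      rcases n with _ | n
      · simp [h1, hC0]
      · rw [show 2 * (n + 1) + 1 = 2 * n + 1 + 2 by ring, hrec, sum_range_two_mul_add_one,
          hC _ (n + 1) (by omega), mul_sum]
        have hz : ∑ j ∈ range n, q ^ (2 * j + 1 + 1) * Cs 1 (-1) q (2 * j + 1 + 1)
            * Cs 1 (-1) q (2 * n + 1 - (2 * j + 1)) = 0 := by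
          refine sum_eq_zero fun j hj => ?_
          rw [mem_range] at hj
          rw [(ih j (by omega)).2]
          ring
        rw [hz, add_zero, ← sum_neg_distrib]
        refine sum_congr rfl fun j hj => ?_
        rw [mem_range] at hj
        obtain ⟨i, rfl⟩ : ∃ i, n = j + i := ⟨n - j, by omega⟩
        rw [show 2 * (j + i) + 1 - 2 * j = 2 * i + 1 by omega,
          show j + i + 1 - j - 1 = i by omega, (ih j (by omega)).1, (ih i (by omega)).1]
        ring
    refine ⟨hodd, ?_⟩
    rw [hrec, neg_eq_zero]
    refine sum_eq_zero fun k hk => ?_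
    rw [mem_range] at hk
    rcases Nat.even_or_odd' k with ⟨j, rfl | rfl⟩
    · rw [show 2 * n - 2 * j = 2 * (n - j - 1) + 2 by omega, (ih (n - j - 1) (by omega)).2,
        mul_zero]
    · rw [(ih j (by omega)).2]
      ring
end

section
/- For every n ≥ 0, the Hankel determinants of the q-Motzkin numbers satisfy det(M_{i+j}(q))_{i,j=0}^{n} = q^{n(n+1)(2n+1)/6} and det(M_{i+j+1}(q))_{i,j=0}^{n} = q^{2·C(n+2,3)} · d_{n+1}, where C(n+2,3) is the binomial coefficient and (d_m)_{m≥0} is the integer sequence of period 6 with d₀,…,d₅ = 1, 1, 0, −1, −1, 0. -/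
open Finset

/-!
The functional equation `M(z) = 1 / (1 - z - q z² M(qz))` unfolds to a Jacobi continued fraction
with coefficients `b_k = q ^ k` and `λ_{k+1} = q ^ (2 k + 1)`. Accordingly `M n` is the total weight
of Motzkin paths of length `n`, where a level step at height `k` weighs `q ^ k` and a down step from
height `k + 1` to `k` weighs `q ^ (2 k + 1)` (`motzkinPath_zero_eq`).

Write `L i k` for the weight of paths from height `0` to height `k` in `i` steps. The matrix `L` is
lower unitriangular, and cutting a path of length `i + j` after `i` steps gives
`M (i + j) = ∑ k, L i k * q ^ (k ^ 2) * L j k` (`motzkinPath_add`), as `λ_1 ⋯ λ_k = q ^ (k ^ 2)`.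
Hence the Hankel matrix is `L D Lᵀ` and its determinant is `∏ k ≤ n, q ^ (k ^ 2)`. One more step
before the cut inserts the tridiagonal (Jacobi) transfer matrix `T`: the shifted Hankel matrix is
`L T D Lᵀ`. The three-term recurrence for `det T` reduces to `d (m + 2) = d (m + 1) - d m`, up to
powers of `q`, giving `det T = q ^ C(n + 1, 2) * d (n + 1)`.

All identities are proved without cancelling `q`, so they hold in any commutative ring.
-/

/-- Total weight of Motzkin paths from height `0` to height `k` in `n` steps:
up steps weigh `1`, level steps at height `k` weigh `q ^ (s + k)`, and down steps from height
`k + 1` to `k` weigh `q ^ (2 * (s + k) + 1)`. The parameter `s` is an offset for the heights: paths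
that stay at or above height `s` are, seen from there, paths with offset `s`. -/
def motzkinPath {R : Type*} [CommRing R] (q : R) (s : ℕ) : ℕ → ℕ → R
  | 0, 0 => 1
  | 0, _ + 1 => 0
  | n + 1, 0 => q ^ s * motzkinPath q s n 0 + q ^ (2 * s + 1) * motzkinPath q s n 1
  | n + 1, k + 1 => motzkinPath q s n k + q ^ (s + (k + 1)) * motzkinPath q s n (k + 1)
      + q ^ (2 * (s + (k + 1)) + 1) * motzkinPath q s n (k + 2)

lemma motzkinPath_eq_zero {R : Type*} [CommRing R] (q : R) (s n k : ℕ) (h : n < k) :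
    motzkinPath q s n k = 0 := by
  induction n generalizing k with
  | zero => obtain _ | k := k <;> simp_all [motzkinPath]
  | succ n ih =>
    obtain _ | k := k
    · omega
    · simp [motzkinPath, ih k (by omega), ih (k + 1) (by omega), ih (k + 2) (by omega)]

lemma motzkinPath_self {R : Type*} [CommRing R] (q : R) (s n : ℕ) :
    motzkinPath q s n n = 1 := by
  induction n with
  | zero => simp [motzkinPath]
  | succ n ih =>
    simp [motzkinPath, ih, motzkinPath_eq_zero q s n (n + 1) (by omega),
      motzkinPath_eq_zero q s n (n + 2) (by omega)]

/-- Raising the offset by one scales the weight by `q ^ (n - k)`; stated with `q ^ k` on the left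
so that neither subtraction nor division by `q` occurs. -/
lemma motzkinPath_offset {R : Type*} [CommRing R] (q : R) (s n k : ℕ) :
    q ^ k * motzkinPath q (s + 1) n k = q ^ n * motzkinPath q s n k := by
  induction n generalizing k with
  | zero => obtain _ | k := k <;> simp [motzkinPath]
  | succ n ih =>
    obtain _ | k := k
    · have h0 := ih 0
      have h1 := ih 1
      simp only [motzkinPath]
      linear_combination q ^ (s + 1) * h0 + q ^ (2 * s + 2) * h1
    · have h0 := ih k
      have h1 := ih (k + 1)
      have h2 := ih (k + 2)
      simp only [motzkinPath]
      linear_combination q * h0 + q ^ (s + k + 2) * h1 + q ^ (2 * s + 2 * k + 4) * h2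

/-- Decomposition of a path ending at positive height at its last step up from height `0`. -/
lemma motzkinPath_succ_succ {R : Type*} [CommRing R] (q : R) (s n k : ℕ) :
    motzkinPath q s (n + 1) (k + 1) =
      ∑ m ∈ range (n + 1), motzkinPath q (s + 1) m k * motzkinPath q s (n - m) 0 := by
  induction n generalizing k with
  | zero =>
    obtain _ | k := k <;> simp [motzkinPath]
  | succ n ih =>
    rw [motzkinPath, sum_range_succ', ih k, ih (k + 1)]
    obtain _ | k := k
    · simp only [motzkinPath, Nat.add_sub_add_right, Nat.sub_zero, one_mul, add_mul,
        sum_add_distrib, mul_assoc, ← mul_sum]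
      ring
    · rw [ih k]
      simp only [motzkinPath, Nat.add_sub_add_right, Nat.sub_zero, zero_mul, add_mul,
        sum_add_distrib, mul_assoc, ← mul_sum]
      ring

lemma motzkinPath_zero_eq {R : Type*} [CommRing R] (q : R) (M : ℕ → R)
    (hM0 : M 0 = 1) (hM1 : M 1 = 1)
    (hM : ∀ n : ℕ, 2 ≤ n →
      M n = M (n - 1) + q * ∑ k ∈ range (n - 1), q ^ k * M k * M (n - 2 - k)) (n : ℕ) :
    motzkinPath q 0 n 0 = M n := by
  induction n using Nat.strong_induction_on with
  | _ n ih =>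
    match n, ih with
    | 0, _ => simp [motzkinPath, hM0]
    | 1, _ => simp [motzkinPath, hM1]
    | n + 2, ih =>
      rw [hM (n + 2) (by omega), motzkinPath, motzkinPath_succ_succ, ih (n + 1) (by omega)]
      have : ∀ m ∈ range (n + 1), motzkinPath q (0 + 1) m 0 * motzkinPath q 0 (n - m) 0
          = q ^ m * M m * M (n - m) := by
        intro m hm
        have hm := mem_range.1 hm
        have h := motzkinPath_offset q 0 m 0
        rw [pow_zero, one_mul] at h
        rw [h, ih m (by omega), ih (n - m) (by omega)]
      rw [sum_congr rfl this]
      simp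

/-- The transfer operator of the paths is symmetric for the weights `q ^ (k ^ 2)`, up to a boundary
term (a discrete Green, or Christoffel–Darboux, identity). -/
lemma motzkinPath_green {R : Type*} [CommRing R] (q : R) (i j N : ℕ) :
    ∑ k ∈ range (N + 1), motzkinPath q 0 (i + 1) k * q ^ (k ^ 2) * motzkinPath q 0 j k
      - ∑ k ∈ range (N + 1), motzkinPath q 0 i k * q ^ (k ^ 2) * motzkinPath q 0 (j + 1) k
    = q ^ ((N + 1) ^ 2) * (motzkinPath q 0 i (N + 1) * motzkinPath q 0 j N
      - motzkinPath q 0 i N * motzkinPath q 0 j (N + 1)) := by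
  induction N with
  | zero => simp [motzkinPath]; ring
  | succ N ih =>
    rw [sum_range_succ, sum_range_succ _ (N + 1)]
    simp only [motzkinPath] at ih ⊢
    linear_combination ih

/-- Cutting a path of length `i + j` after `i` steps: the second part, read backwards, is a path
of length `j` reweighted by `q ^ (k ^ 2)`. -/
lemma motzkinPath_add {R : Type*} [CommRing R] (q : R) (i j N : ℕ) (h : i < N ∨ j < N) :
    motzkinPath q 0 (i + j) 0 =
      ∑ k ∈ range N, motzkinPath q 0 i k * q ^ (k ^ 2) * motzkinPath q 0 j k := by
  have key : motzkinPath q 0 (i + j) 0 = ∑ k ∈ range (i + j + N + 1),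
      motzkinPath q 0 i k * q ^ (k ^ 2) * motzkinPath q 0 j k := by
    clear h
    induction i generalizing j with
    | zero =>
      rw [sum_range_succ', sum_eq_zero]
      · simp [motzkinPath]
      · simp [motzkinPath]
    | succ i ih =>
      have h1 := motzkinPath_green q i j (i + 1 + j + N)
      rw [motzkinPath_eq_zero q 0 i _ (by omega : i < i + 1 + j + N + 1),
        motzkinPath_eq_zero q 0 j _ (by omega : j < i + 1 + j + N + 1)] at h1
      have h2 := ih (j + 1)
      rw [show i + (j + 1) = i + 1 + j by ring] at h2
      rw [h2]
      linear_combination -h1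
  rw [key]
  symm
  apply sum_subset
  · intro k hk
    simp only [mem_range] at *
    omega
  · intro k _ hk
    simp only [mem_range] at hk
    rcases h with h | h
    · simp [motzkinPath_eq_zero q 0 i k (by omega)]
    · simp [motzkinPath_eq_zero q 0 j k (by omega)]

/-- Entries of the tridiagonal transfer matrix with height offset `s`: `jacobiEntry q s l k` is the
weight of a single step from height `l` to height `k`. -/
def jacobiEntry {R : Type*} [CommRing R] (q : R) (s l k : ℕ) : R :=
  (if k = l + 1 then 1 else 0) + (if l = k then q ^ (s + k) else 0)
    + (if l = k + 1 then q ^ (2 * (s + k) + 1) else 0)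

lemma jacobiEntry_succ_succ {R : Type*} [CommRing R] (q : R) (s l k : ℕ) :
    jacobiEntry q s (l + 1) (k + 1) = jacobiEntry q (s + 1) l k := by
  simp [jacobiEntry, add_assoc, add_comm 1]

lemma motzkinPath_succ_eq_sum {R : Type*} [CommRing R] (q : R) (n i k : ℕ)
    (hi : i ≤ n) (hk : k ≤ n) :
    motzkinPath q 0 (i + 1) k =
      ∑ l ∈ range (n + 1), motzkinPath q 0 i l * jacobiEntry q 0 l k := by
  -- A step down from height `n + 1` is cut off by the range, but that height is not reachable.
  have hz : motzkinPath q 0 i (n + 1) = 0 := motzkinPath_eq_zero q 0 i _ (by omega)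
  have hcase : k < n ∨ k = n := by omega
  obtain _ | k := k
  · simp only [jacobiEntry, mul_add, sum_add_distrib, mul_ite, mul_zero, sum_ite_eq',
      mem_range, motzkinPath]
    rcases hcase with h | rfl
    · simp [h]; ring
    · simp at hz; simp [hz]
  · simp only [jacobiEntry, mul_add, sum_add_distrib, mul_ite, mul_zero, sum_ite_eq',
      sum_ite_eq, mem_range, motzkinPath, Nat.add_right_cancel_iff]
    rcases hcase with h | rfl
    · simp [h, show k < n + 1 by omega, show k < n by omega]; ring
    · simp [hz]; ring

/-- Three-term recurrence for tridiagonal determinants, by expansion at the top left corner. -/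
lemma det_jacobi_succ_succ {R : Type*} [CommRing R] (q : R) (s n : ℕ) :
    Matrix.det (Matrix.of fun i j : Fin (n + 2) => jacobiEntry q s i j) =
      q ^ s * Matrix.det (Matrix.of fun i j : Fin (n + 1) => jacobiEntry q (s + 1) i j)
      - q ^ (2 * s + 1) *
        Matrix.det (Matrix.of fun i j : Fin n => jacobiEntry q (s + 2) i j) := by
  rw [Matrix.det_succ_row_zero, Fin.sum_univ_succ, Fin.sum_univ_succ, sum_eq_zero, add_zero]
  · have h1 : (Matrix.of fun i j : Fin (n + 2) => jacobiEntry q s i j).submatrix Fin.succ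
        (Fin.succAbove 0) = Matrix.of fun i j : Fin (n + 1) => jacobiEntry q (s + 1) i j := by
      ext i j
      simp [jacobiEntry_succ_succ]
    have h2 : Matrix.det ((Matrix.of fun i j : Fin (n + 2) => jacobiEntry q s i j).submatrix
        Fin.succ (Fin.succAbove (Fin.succ 0))) = q ^ (2 * s + 1) *
        Matrix.det (Matrix.of fun i j : Fin n => jacobiEntry q (s + 2) i j) := by
      rw [Matrix.det_succ_column_zero, Fin.sum_univ_succ, sum_eq_zero, add_zero]
      · have h3 : (((Matrix.of fun i j : Fin (n + 2) => jacobiEntry q s i j).submatrix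
            Fin.succ (Fin.succAbove (Fin.succ 0))).submatrix (Fin.succAbove 0) Fin.succ)
            = Matrix.of fun i j : Fin n => jacobiEntry q (s + 2) i j := by
          ext i j
          simp [jacobiEntry_succ_succ]
        rw [h3]
        simp [jacobiEntry]
      · intro i _
        simp [jacobiEntry]
    rw [h1, h2]
    simp [jacobiEntry]
    ring
  · intro i _
    simp [jacobiEntry]

lemma det_jacobi {R : Type*} [CommRing R] (q : R) (d : ℕ → ℤ)
    (hd0 : d 0 = 1) (hd1 : d 1 = 1) (hd : ∀ m, d (m + 2) = d (m + 1) - d m) (n s : ℕ) :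
    Matrix.det (Matrix.of fun i j : Fin n => jacobiEntry q s i j) =
      q ^ (s * n + n.choose 2) * (d n : R) := by
  induction n using Nat.strong_induction_on generalizing s with
  | _ n ih =>
    match n, ih with
    | 0, _ => simp [hd0]
    | 1, _ => simp [hd1, jacobiEntry]
    | n + 2, ih =>
      have c1 : (n + 1).choose 2 = n + n.choose 2 := by
        simp [Nat.choose_succ_succ' n 1]
      have c2 : (n + 2).choose 2 = n + 1 + (n + n.choose 2) := by
        rw [← c1]; simp [Nat.choose_succ_succ' (n + 1) 1]
      rw [det_jacobi_succ_succ, ih (n + 1) (by omega), ih n (by omega), hd, c1, c2]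
      push_cast
      ring

lemma sum_range_sq (n : ℕ) :
    6 * ∑ k ∈ range (n + 1), k ^ 2 = n * (n + 1) * (2 * n + 1) := by
  induction n with
  | zero => simp
  | succ n ih => rw [sum_range_succ, mul_add, ih]; ring

lemma sum_range_sq_add_choose (n : ℕ) :
    ∑ k ∈ range (n + 1), k ^ 2 + (n + 1).choose 2 = 2 * (n + 2).choose 3 := by
  induction n with
  | zero => simp
  | succ n ih =>
    have c1 : (n + 2).choose 2 = n + 1 + (n + 1).choose 2 := by
      simp [Nat.choose_succ_succ' (n + 1) 1]
    have c2 : (n + 3).choose 3 = (n + 2).choose 2 + (n + 2).choose 3 :=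
      Nat.choose_succ_succ' (n + 2) 2
    have c3 : 2 * (n + 1).choose 2 = (n + 1) * n := by
      rw [Nat.choose_two_right, Nat.mul_div_cancel' (Nat.even_mul_pred_self _).two_dvd]; simp
    rw [sum_range_succ, show n + 1 + 1 = n + 2 from rfl, show n + 1 + 2 = n + 3 from rfl, c2, c1]
    nlinarith

/-- Hankel determinants of the q-Motzkin numbers:
`det(M_{i+j})_{i,j=0}^n = q^{n(n+1)(2n+1)/6}` and
`det(M_{i+j+1})_{i,j=0}^n = q^{2·C(n+2,3)} · d_{n+1}`, where `(d_m)` is the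
period-6 integer sequence `1, 1, 0, −1, −1, 0, …`. -/
theorem stmt_19 {R : Type*} [CommRing R] (q : R) (M : ℕ → R)
    (hM0 : M 0 = 1) (hM1 : M 1 = 1)
    (hM : ∀ n : ℕ, 2 ≤ n →
      M n = M (n - 1) + q * ∑ k ∈ range (n - 1), q ^ k * M k * M (n - 2 - k))
    (d : ℕ → ℤ)
    (hd0 : d 0 = 1) (hd1 : d 1 = 1) (hd2 : d 2 = 0)
    (hd3 : d 3 = -1) (hd4 : d 4 = -1) (hd5 : d 5 = 0)
    (hdper : ∀ m : ℕ, d (m + 6) = d m) :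
    ∀ n : ℕ,
      Matrix.det (Matrix.of fun i j : Fin (n + 1) => M (i.val + j.val))
        = q ^ (n * (n + 1) * (2 * n + 1) / 6) ∧
      Matrix.det (Matrix.of fun i j : Fin (n + 1) => M (i.val + j.val + 1))
        = q ^ (2 * Nat.choose (n + 2) 3) * (d (n + 1) : R) := by
  have hd : ∀ m, d (m + 2) = d (m + 1) - d m := by
    intro m
    induction m using Nat.strong_induction_on with
    | _ m ih =>
      match m, ih with
      | 0, _ => simp [*]
      | 1, _ => simp [*]
      | 2, _ => simp [*]
      | 3, _ => simp [*]
      | 4, _ => have := hdper 0; simp_all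
      | 5, _ => have := hdper 0; have := hdper 1; simp_all
      | m + 6, ih =>
        have h := ih m (by omega)
        rw [← hdper (m + 2), ← hdper (m + 1), ← hdper m] at h
        exact h
  intro n
  have hL := motzkinPath_zero_eq q M hM0 hM1 hM
  set L : Matrix (Fin (n + 1)) (Fin (n + 1)) R :=
    Matrix.of fun i j => motzkinPath q 0 i j with hLdef
  set D : Matrix (Fin (n + 1)) (Fin (n + 1)) R :=
    Matrix.diagonal fun i => q ^ (i.val ^ 2) with hDdef
  set T : Matrix (Fin (n + 1)) (Fin (n + 1)) R :=
    Matrix.of fun i j => jacobiEntry q 0 i j with hTdef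
  have detL : L.det = 1 := by
    rw [Matrix.det_of_isLowerTriangular]
    · simp [hLdef, motzkinPath_self]
    · intro i j hij
      exact motzkinPath_eq_zero q 0 i j hij
  have detD : D.det = q ^ (∑ k ∈ range (n + 1), k ^ 2) := by
    rw [Matrix.det_diagonal, Fin.prod_univ_eq_prod_range (fun k => q ^ (k ^ 2)),
      prod_pow_eq_pow_sum]
  have H0 : (Matrix.of fun i j : Fin (n + 1) => M (i.val + j.val)) = L * D * L.transpose := by
    ext i j
    rw [Matrix.mul_apply]
    simp only [hDdef, Matrix.mul_diagonal, hLdef, Matrix.transpose_apply, Matrix.of_apply]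
    rw [Fin.sum_univ_eq_sum_range
      (fun k => motzkinPath q 0 i k * q ^ (k ^ 2) * motzkinPath q 0 j k),
      ← motzkinPath_add q i j (n + 1) (Or.inl i.2), hL]
  have H1 : (Matrix.of fun i j : Fin (n + 1) => M (i.val + j.val + 1))
      = L * T * D * L.transpose := by
    have hLT : L * T = Matrix.of fun i j : Fin (n + 1) => motzkinPath q 0 (i + 1) j := by
      ext i k
      rw [Matrix.mul_apply]
      simp only [hLdef, hTdef, Matrix.of_apply]
      rw [Fin.sum_univ_eq_sum_range
        (fun l => motzkinPath q 0 i l * jacobiEntry q 0 l k),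
        ← motzkinPath_succ_eq_sum q n i k (by omega) (by omega)]
    rw [hLT]
    ext i j
    rw [Matrix.mul_apply]
    simp only [hDdef, Matrix.mul_diagonal, hLdef, Matrix.transpose_apply, Matrix.of_apply]
    rw [Fin.sum_univ_eq_sum_range
      (fun k => motzkinPath q 0 (i + 1) k * q ^ (k ^ 2) * motzkinPath q 0 j k),
      ← motzkinPath_add q (i + 1) j (n + 1) (Or.inr j.2), hL]
    congr 1
    ring
  constructor
  · rw [H0, Matrix.det_mul, Matrix.det_mul, Matrix.det_transpose, detL, detD, ← sum_range_sq n]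
    simp
  · rw [H1, Matrix.det_mul, Matrix.det_mul, Matrix.det_mul, Matrix.det_transpose, detL, detD,
      hTdef, det_jacobi q d hd0 hd1 hd, ← sum_range_sq_add_choose n]
    ring
end
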